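/- arXiv:2007.03554 — 5 statements merged into one kernel-verified Lean document; each statement's English description precedes it below -/
import Mathlib

section
/- Let G be a finite group, p a prime dividing |G|, H a subgroup of G, and x ∈ H a p-element. Define spr_G(x) = |S_G(x)|/|G| where S_G(x) = {g ∈ G : ⟨x⟩ is subnormal in ⟨x,g⟩}. Then spr_G(x) ≤ spr_H(x); moreover, if H is normal in G, then spr_G(x) = spr_H(x). -/
open Subgroup

/-- `H` is normal in `K` (both subgroups of an ambient group). -/
def NormalIn {G : Type*} [Group G] (H K : Subgroup G) : Prop :=
  H ≤ K ∧ (H.subgroupOf K).Normal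

/-- `H` is subnormal in `K`: there is a chain `H = H₀ ⊴ H₁ ⊴ ⋯ ⊴ Hₙ = K`. -/
def IsSubnormalIn {G : Type*} [Group G] (H K : Subgroup G) : Prop :=
  Relation.ReflTransGen NormalIn H K

/-- The Wielandt subnormalizer of `⟨x⟩` in `G`. -/
def subnormalizerSet {G : Type*} [Group G] (x : G) : Set G :=
  {g : G | IsSubnormalIn (zpowers x) (zpowers x ⊔ zpowers g)}

/-- `spr_G(x) = |S_G(x)|/|G|`. -/
noncomputable def spr {G : Type*} [Group G] (x : G) : ℚ :=
  (Nat.card (subnormalizerSet x) : ℚ) / (Nat.card G : ℚ)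


/-- `x` is a `p`-element: its order is a power of `p`. -/
def IsPElement (p : ℕ) {G : Type*} [Group G] (x : G) : Prop :=
  ∃ k : ℕ, orderOf x = p ^ k


namespace Cas

open scoped Pointwise

variable {G : Type*} [Group G]

/-- Maximal `p`-subgroups of `K`. -/
def Mx (p : ℕ) (K R : Subgroup G) : Prop :=
  Maximal (fun R : Subgroup G => R ≤ K ∧ IsPGroup p R) R

lemma conj_mem {g x : G} {R : Subgroup G} : x ∈ MulAut.conj g • R ↔ g⁻¹ * x * g ∈ R := by
  rw [Subgroup.mem_pointwise_smul_iff_inv_smul_mem]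
  simp [MulAut.smul_def, ← map_inv, MulAut.conj_apply]

lemma conj_le {g : G} {K R : Subgroup G} (hg : g ∈ K) (h : R ≤ K) : MulAut.conj g • R ≤ K := by
  intro x hx
  rw [conj_mem] at hx
  have := K.mul_mem (K.mul_mem hg (h hx)) (K.inv_mem hg)
  simpa [mul_assoc] using this

lemma conj_pgroup {p : ℕ} {g : G} {R : Subgroup G} (h : IsPGroup p R) :
    IsPGroup p (MulAut.conj g • R : Subgroup G) :=
  h.map _

lemma conj_conj (g h : G) (R : Subgroup G) :
    MulAut.conj g • (MulAut.conj h • R) = MulAut.conj (g * h) • R := by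
  rw [smul_smul, map_mul]

lemma conj_inv_eq {g : G} {R S : Subgroup G} (h : MulAut.conj g • R = S) :
    MulAut.conj g⁻¹ • S = R := by
  rw [← h, conj_conj]; simp

lemma mem_norm {g : G} {R : Subgroup G} :
    g ∈ normalizer (R : Set G) ↔ MulAut.conj g • R = R := by
  rw [Subgroup.mem_normalizer_iff]
  constructor
  · intro h
    ext x
    rw [conj_mem, h]
    simp [mul_assoc]
  · intro h n
    conv_rhs => rw [← h]
    simp only [conj_mem]
    simp [mul_assoc]

lemma mx_conj_mx {p : ℕ} {K R : Subgroup G} {g : G} (hg : g ∈ K) (h : Mx p K R) :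
    Mx p K (MulAut.conj g • R) := by
  refine ⟨⟨conj_le hg h.1.1, conj_pgroup h.1.2⟩, ?_⟩
  intro S hS hle
  have h1 := @h.2 (MulAut.conj g⁻¹ • S) ⟨conj_le (K.inv_mem hg) hS.1, conj_pgroup hS.2⟩
  rw [Subgroup.subset_pointwise_smul_iff, ← map_inv, inv_inv] at h1
  have h2 := h1 hle
  rwa [map_inv, Subgroup.pointwise_smul_subset_iff, inv_inv] at h2

variable [Finite G]

lemma mx_exists {p : ℕ} {K Q : Subgroup G} (hQ : Q ≤ K) (hp : IsPGroup p Q) :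
    ∃ R, Q ≤ R ∧ Mx p K R :=
  Finite.exists_le_maximal (p := fun R : Subgroup G => R ≤ K ∧ IsPGroup p R) ⟨hQ, hp⟩

/-- Turn a maximal `p`-subgroup of `K` into a Sylow subgroup of the type `K`. -/
def toSyl {p : ℕ} {K R : Subgroup G} (h : Mx p K R) : Sylow p K where
  toSubgroup := R.subgroupOf K
  isPGroup' := h.1.2.comap_of_injective _ K.subtype_injective
  is_maximal' := by
    intro Q hQ hle
    have h1 := @h.2 (Q.map K.subtype) ⟨Subgroup.map_subtype_le Q, hQ.map _⟩
    have h2 := h1 (by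
      have := Subgroup.map_mono (f := K.subtype) hle
      rwa [Subgroup.subgroupOf_map_subtype, inf_eq_left.2 h.1.1] at this)
    refine le_antisymm ?_ hle
    intro x hx
    exact h2 ⟨x, hx, rfl⟩

lemma mx_conj {p : ℕ} [Fact p.Prime] {K P R : Subgroup G} (hP : Mx p K P) (hR : Mx p K R) :
    ∃ g ∈ K, MulAut.conj g • P = R := by
  obtain ⟨g, hg⟩ := MulAction.exists_smul_eq K (toSyl hP) (toSyl hR)
  refine ⟨g, g.2, ?_⟩
  have h1 : MulAut.conj g • (P.subgroupOf K) = R.subgroupOf K :=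
    congrArg Sylow.toSubgroup hg
  have key : ∀ x (hx : x ∈ K), (g : G)⁻¹ * x * g ∈ P ↔ x ∈ R := by
    intro x hx
    have := SetLike.ext_iff.1 h1 ⟨x, hx⟩
    rw [conj_mem] at this
    simpa [Subgroup.mem_subgroupOf] using this
  ext x
  rw [conj_mem]
  constructor
  · intro h
    have hx : x ∈ K := by
      have := K.mul_mem (K.mul_mem g.2 (hP.1.1 h)) (K.inv_mem g.2)
      simpa [mul_assoc] using this
    exact (key x hx).1 h
  · intro h
    exact (key x (hR.1.1 h)).2 h

/-- normalizers grow in `p`-groups -/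
lemma grow {p : ℕ} [Fact p.Prime] {A R : Subgroup G} (hR : IsPGroup p R) (h : A < R) :
    A < R ⊓ normalizer (A : Set G) := by
  have hn := hR.isNilpotent
  have hc := @Group.normalizerCondition_of_isNilpotent R _ hn
  have h1 : A.subgroupOf R < ⊤ := by
    rw [lt_top_iff_ne_top, Ne, Subgroup.subgroupOf_eq_top]
    exact not_le_of_gt h
  obtain ⟨y, hy, hy'⟩ := SetLike.exists_of_lt (hc _ h1)
  refine lt_of_le_of_ne (le_inf h.le Subgroup.le_normalizer) ?_
  intro he
  apply hy'
  rw [Subgroup.mem_subgroupOf, he]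
  refine ⟨y.2, mem_norm.2 ?_⟩
  rw [mem_norm] at hy
  ext x
  have key : ∀ z (hz : z ∈ R), (y : G)⁻¹ * z * y ∈ A ↔ z ∈ A := by
    intro z hz
    have := SetLike.ext_iff.1 hy ⟨z, hz⟩
    rw [conj_mem] at this
    simpa [Subgroup.mem_subgroupOf] using this
  rw [conj_mem]
  constructor
  · intro h'
    have hx : x ∈ R := by
      have := R.mul_mem (R.mul_mem y.2 (h.le h')) (R.inv_mem y.2)
      simpa [mul_assoc] using this
    exact (key x hx).1 h'
  · intro h'
    exact (key x (h.le h')).2 h'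

lemma normalIn_iff {B C : Subgroup G} :
    NormalIn B C ↔ B ≤ C ∧ ∀ c ∈ C, MulAut.conj c • B = B := by
  unfold NormalIn
  refine and_congr_right fun h => ?_
  rw [Subgroup.normal_subgroupOf_iff_le_normalizer h]
  exact forall₂_congr fun c _ => mem_norm

lemma mx_normal {p : ℕ} [Fact p.Prime] {B C P : Subgroup G} (hB : NormalIn B C)
    (hP : Mx p C P) : Mx p B (P ⊓ B) := by
  rw [normalIn_iff] at hB
  refine ⟨⟨inf_le_right, hP.1.2.to_le inf_le_left⟩, ?_⟩
  intro S hS hle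
  obtain ⟨R, hSR, hR⟩ := mx_exists (hS.1.trans hB.1) hS.2
  obtain ⟨c, hc, hcR⟩ := mx_conj hP hR
  have h1 : S ≤ MulAut.conj c • (P ⊓ B) := by
    rw [Subgroup.smul_inf, hcR, hB.2 c hc]
    exact le_inf hSR hS.1
  have h2 : Nat.card S ≤ Nat.card (P ⊓ B : Subgroup G) := by
    refine (Subgroup.card_le_of_le h1).trans ?_
    exact le_of_eq (Nat.card_congr (Subgroup.equivSMul (MulAut.conj c) (P ⊓ B)).toEquiv.symm)
  exact (Subgroup.eq_of_le_of_card_ge hle h2).ge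

/-- subnormal `p`-subgroups lie in all maximal `p`-subgroups -/
lemma subn_le_mx {p : ℕ} [Fact p.Prime] {A K : Subgroup G} (hA : IsPGroup p A)
    (h : IsSubnormalIn A K) : A ≤ K ∧ ∀ P, Mx p K P → A ≤ P := by
  induction h with
  | refl =>
    refine ⟨le_rfl, fun P hP => hP.2 ⟨le_rfl, hA⟩ hP.1.1⟩
  | tail _ hBC ih =>
    exact ⟨ih.1.trans hBC.1, fun P hP => (ih.2 _ (mx_normal hBC hP)).trans inf_le_left⟩

lemma subn_of_pgroup {p : ℕ} [Fact p.Prime] {R : Subgroup G} (hR : IsPGroup p R) :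
    ∀ A, A ≤ R → IsSubnormalIn A R := by
  intro A
  induction A using WellFoundedGT.induction with
  | ind A ih =>
    intro hA
    rcases hA.eq_or_lt with h | h
    · subst h; exact Relation.ReflTransGen.refl
    · have h1 := grow hR h
      refine Relation.ReflTransGen.head ?_ (ih _ h1 inf_le_left)
      rw [normalIn_iff]
      exact ⟨h1.le, fun c hc => mem_norm.1 hc.2⟩

lemma subnormalizer_iff {p : ℕ} [Fact p.Prime] {x g : G} (hx : IsPGroup p (zpowers x)) :
    g ∈ subnormalizerSet x ↔
      ∃ R : Subgroup G, IsPGroup p R ∧ zpowers x ≤ R ∧ MulAut.conj g • R = R := by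
  constructor
  · intro h
    obtain ⟨hle, hmx⟩ := subn_le_mx hx h
    set K := zpowers x ⊔ zpowers g
    have hgK : g ∈ K := (le_sup_right : zpowers g ≤ K) (mem_zpowers g)
    obtain ⟨P0, -, hP0⟩ := mx_exists (p := p) (K := K) (Q := ⊥) bot_le IsPGroup.of_bot
    refine ⟨sInf {P | Mx p K P}, hP0.1.2.to_le (sInf_le hP0), le_sInf hmx, ?_⟩
    ext y
    rw [conj_mem]
    simp only [Subgroup.mem_sInf, Set.mem_ofPred_eq]
    constructor
    · intro h P hP
      have := h _ (mx_conj_mx (K.inv_mem hgK) hP)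
      rw [conj_mem] at this
      simpa [mul_assoc] using this
    · intro h P hP
      have := h _ (mx_conj_mx hgK hP)
      rwa [conj_mem] at this
  · rintro ⟨R, hR, hxR, hg⟩
    have h1 : IsSubnormalIn (zpowers x) (R ⊓ (zpowers x ⊔ zpowers g)) :=
      subn_of_pgroup (hR.to_le inf_le_left) _ (le_inf hxR le_sup_left)
    refine h1.tail ?_
    rw [normalIn_iff]
    refine ⟨inf_le_right, fun c hc => ?_⟩
    rw [Subgroup.smul_inf, Subgroup.conj_smul_eq_self_of_mem hc]
    have h2 : zpowers x ⊔ zpowers g ≤ normalizer (R : Set G) := by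
      refine sup_le (hxR.trans Subgroup.le_normalizer) ?_
      rw [zpowers_le]
      exact mem_norm.2 hg
    rw [mem_norm.1 (h2 hc)]

section Poset

open Classical in
lemma ex_weight {α : Type*} [PartialOrder α] (n : ℕ) : ∀ A : Finset α, A.card = n →
    ∃ m : α → ℤ, (∀ a, a ∉ A → m a = 0) ∧ ∀ a ∈ A, ∑ b ∈ A with a ≤ b, m b = 1 := by
  induction n with
  | zero =>
    intro A hA
    rw [Finset.card_eq_zero] at hA
    subst hA
    exact ⟨fun _ => 0, by simp, by simp⟩
  | succ n ih =>
    intro A hA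
    have hne : A.Nonempty := by
      rw [← Finset.card_pos]; omega
    obtain ⟨a, ha, hmin⟩ := A.exists_minimal hne
    obtain ⟨m, hm0, hm⟩ := ih (A.erase a) (by rw [Finset.card_erase_of_mem ha]; omega)
    refine ⟨Function.update m a (1 - ∑ b ∈ A.erase a with a ≤ b, m b), ?_, ?_⟩
    · intro b hb
      have hba : b ≠ a := by rintro rfl; exact hb ha
      rw [Function.update_of_ne hba]
      exact hm0 b (by simp [hb])
    · intro c hc
      have hA' : A = insert a (A.erase a) := (Finset.insert_erase ha).symm
      have hrest : ∀ c, ∑ b ∈ A.erase a with c ≤ b,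
          Function.update m a (1 - ∑ b ∈ A.erase a with a ≤ b, m b) b
          = ∑ b ∈ A.erase a with c ≤ b, m b := by
        intro c
        refine Finset.sum_congr rfl fun b hb => ?_
        rw [Function.update_of_ne]
        rintro rfl
        simp at hb
      rw [hA', Finset.filter_insert]
      by_cases hca : c ≤ a
      · have hcea : c = a := le_antisymm hca (hmin hc hca)
        rw [if_pos hca, Finset.sum_insert (by simp), ← hA', hrest]
        subst hcea
        simp
      · rw [if_neg hca, ← hA', hrest]
        refine hm c ?_
        rw [Finset.mem_erase]
        exact ⟨fun h => hca h.le, hc⟩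

open Classical in
lemma ex_coweight {α : Type*} [PartialOrder α] (A : Finset α) :
    ∃ k : α → ℤ, ∀ a ∈ A, ∑ b ∈ A with b ≤ a, k b = 1 := by
  obtain ⟨m, -, hm⟩ := ex_weight (α := αᵒᵈ) _ (A.map OrderDual.toDual.toEmbedding) rfl
  refine ⟨fun a => m (OrderDual.toDual a), fun a ha => ?_⟩
  have := hm (OrderDual.toDual a) (by simpa using ha)
  rw [Finset.filter_map, Finset.sum_map] at this
  simpa using this

open Classical in
lemma euler1 {α : Type*} [PartialOrder α] (A B : Finset α) (f : α → α) (hf : ∀ a ∈ A, f a ∈ B)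
    (hg : ∀ a ∈ A, ∀ b ∈ B, b ≤ f a ↔ b ≤ a) (m k : α → ℤ)
    (hm : ∀ b ∈ B, ∑ a ∈ A with b ≤ a, m a = 1)
    (hk : ∀ a ∈ B, ∑ b ∈ B with b ≤ a, k b = 1) :
    ∑ a ∈ A, m a = ∑ b ∈ B, k b := by
  calc ∑ a ∈ A, m a = ∑ a ∈ A, ∑ b ∈ B, if b ≤ a then m a * k b else 0 := by
        refine Finset.sum_congr rfl fun a ha => ?_
        rw [← Finset.sum_filter, ← Finset.mul_sum]
        have : B.filter (fun b => b ≤ a) = B.filter (fun b => b ≤ f a) :=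
          Finset.filter_congr fun b hb => (hg a ha b hb).symm
        rw [this, hk _ (hf a ha), mul_one]
    _ = ∑ b ∈ B, ∑ a ∈ A, if b ≤ a then m a * k b else 0 := Finset.sum_comm
    _ = ∑ b ∈ B, k b := by
        refine Finset.sum_congr rfl fun b hb => ?_
        rw [← Finset.sum_filter, ← Finset.sum_mul, hm b hb, one_mul]

open Classical in
lemma euler {α : Type*} [PartialOrder α] (A B : Finset α) (f : α → α) (hf : ∀ a ∈ A, f a ∈ B)
    (hg : ∀ a ∈ A, ∀ b ∈ B, b ≤ f a ↔ b ≤ a) (m m' : α → ℤ)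
    (hm : ∀ b ∈ B, ∑ a ∈ A with b ≤ a, m a = 1)
    (hm' : ∀ b ∈ B, ∑ a ∈ B with b ≤ a, m' a = 1) :
    ∑ a ∈ A, m a = ∑ b ∈ B, m' b := by
  obtain ⟨k, hk⟩ := ex_coweight B
  rw [euler1 A B f hf hg m k hm hk]
  exact (euler1 B B id (fun a h => h) (fun _ _ _ _ => Iff.rfl) m' k hm' hk).symm

end Poset

/-- Elements of `K`. -/
noncomputable def KF (K : Subgroup G) : Finset G := (Set.toFinite (K : Set G)).toFinset

lemma mem_KF {K : Subgroup G} {g : G} : g ∈ KF K ↔ g ∈ K := by simp [KF]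

/-- `p`-subgroups of `K`. -/
noncomputable def PP (p : ℕ) (K : Subgroup G) : Finset (Subgroup G) :=
  (Set.toFinite {R : Subgroup G | R ≤ K ∧ IsPGroup p R}).toFinset

lemma mem_PP {p : ℕ} {K R : Subgroup G} : R ∈ PP p K ↔ R ≤ K ∧ IsPGroup p R := by simp [PP]

/-- `g`-invariant `p`-subgroups of `K`. -/
noncomputable def II (p : ℕ) (K : Subgroup G) (g : G) : Finset (Subgroup G) :=
  (Set.toFinite {R : Subgroup G | (R ≤ K ∧ IsPGroup p R) ∧ MulAut.conj g • R = R}).toFinset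

lemma mem_II {p : ℕ} {K R : Subgroup G} {g : G} :
    R ∈ II p K g ↔ (R ≤ K ∧ IsPGroup p R) ∧ MulAut.conj g • R = R := by simp [II]

open Classical in
/-- order of the normalizer of `R` in `K` -/
noncomputable def nrm (K R : Subgroup G) : ℕ := {g ∈ KF K | MulAut.conj g • R = R}.card

open Classical in
lemma fibre {p : ℕ} [Fact p.Prime] {K P R : Subgroup G} (hP : Mx p K P) (hR : Mx p K R) :
    {g ∈ KF K | MulAut.conj g • P = R}.card = nrm K R := by
  obtain ⟨g0, hg0, h0⟩ := mx_conj hP hR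
  unfold nrm
  refine Finset.card_bij' (fun g _ => g * g0⁻¹) (fun g _ => g * g0) ?_ ?_ ?_ ?_
  · intro g hg
    simp only [Finset.mem_filter, mem_KF] at hg ⊢
    refine ⟨K.mul_mem hg.1 (K.inv_mem hg0), ?_⟩
    rw [← conj_conj, conj_inv_eq h0, hg.2]
  · intro g hg
    simp only [Finset.mem_filter, mem_KF] at hg ⊢
    refine ⟨K.mul_mem hg.1 hg0, ?_⟩
    rw [← conj_conj, h0, hg.2]
  · intro g _; simp
  · intro g _; simp

open Classical in
lemma total {p : ℕ} [Fact p.Prime] {K P : Subgroup G} (hP : Mx p K P) (T : Subgroup G → Prop) :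
    {g ∈ KF K | T (MulAut.conj g • P)}.card
      = ∑ R ∈ PP p K with Mx p K R ∧ T R, nrm K R := by
  rw [Finset.card_eq_sum_card_fiberwise (f := fun g => MulAut.conj g • P)
    (t := {R ∈ PP p K | Mx p K R ∧ T R})]
  · refine Finset.sum_congr rfl fun R hR => ?_
    simp only [Finset.mem_filter] at hR
    rw [← fibre hP hR.2.1, Finset.filter_filter]
    congr 1
    refine Finset.filter_congr fun g _ => ?_
    constructor
    · rintro ⟨_, h⟩; exact h
    · intro h; exact ⟨h ▸ hR.2.2, h⟩
  · intro g hg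
    simp only [Finset.coe_filter, Set.mem_ofPred_eq, mem_KF] at hg ⊢
    have := mx_conj_mx hg.1 hP
    exact ⟨mem_PP.2 this.1, this, hg.2⟩

open Classical in
/-- weights -/
def WW (p : ℕ) (K : Subgroup G) (m : G → Subgroup G → ℤ) : Prop :=
  ∀ g ∈ K, (∀ R, R ∉ II p K g → m g R = 0) ∧
    ∀ Q ∈ II p K g, ∑ R ∈ II p K g with Q ≤ R, m g R = 1

lemma ex_WW (p : ℕ) (K : Subgroup G) : ∃ m, WW p K m := by
  choose m hm using fun g => ex_weight _ (II p K g) rfl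
  exact ⟨m, fun g _ => hm g⟩

open Classical in
lemma sum_II_PP {p : ℕ} {K : Subgroup G} {m : G → Subgroup G → ℤ} (hm : WW p K m) {g : G}
    (hg : g ∈ K) (T : Subgroup G → Prop) :
    ∑ R ∈ PP p K with T R, m g R = ∑ R ∈ II p K g with T R, m g R := by
  symm
  apply Finset.sum_subset
  · intro R hR
    simp only [Finset.mem_filter, mem_II, mem_PP] at hR ⊢
    exact ⟨hR.1.1, hR.2⟩
  · intro R hR hR'
    refine (hm g hg).1 R fun h => hR' ?_
    rw [Finset.mem_filter] at hR ⊢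
    exact ⟨h, hR.2⟩

open Classical in
lemma sum_weight {p : ℕ} {K : Subgroup G} {m : G → Subgroup G → ℤ} (hm : WW p K m) {g : G}
    (hg : g ∈ K) (Q : Subgroup G) :
    ∑ R ∈ PP p K with Q ≤ R, m g R = if (∃ R ∈ II p K g, Q ≤ R) then 1 else 0 := by
  rw [sum_II_PP hm hg]
  split_ifs with h
  · obtain ⟨R0, hR0, hQR0⟩ := h
    have hX : sInf {R | R ∈ II p K g ∧ Q ≤ R} ∈ II p K g := by
      have hle : sInf {R | R ∈ II p K g ∧ Q ≤ R} ≤ R0 := sInf_le ⟨hR0, hQR0⟩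
      rw [mem_II] at hR0
      refine mem_II.2 ⟨⟨hle.trans hR0.1.1, hR0.1.2.to_le hle⟩, ?_⟩
      ext y
      rw [conj_mem]
      simp only [Subgroup.mem_sInf, Set.mem_ofPred_eq]
      refine forall₂_congr fun R hR => ?_
      rw [← conj_mem, (mem_II.1 hR.1).2]
    rw [← (hm g hg).2 _ hX]
    refine Finset.sum_congr (Finset.filter_congr fun R hR => ?_) fun _ _ => rfl
    constructor
    · intro h; exact sInf_le ⟨hR, h⟩
    · intro h; exact (le_sInf fun R hR => hR.2).trans h
  · refine Finset.sum_eq_zero fun R hR => ?_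
    rw [Finset.mem_filter] at hR
    exact absurd ⟨R, hR⟩ h

open Classical in
lemma main (p : ℕ) [Fact p.Prime] (K : Subgroup G) : ∀ m, WW p K m → ∀ R ∈ PP p K,
    ∑ g ∈ KF K, m g R = if Mx p K R then (nrm K R : ℤ) else 0 := by
  induction K using WellFoundedLT.induction with
  | ind K ihK =>
  intro m hm R
  induction R using WellFoundedGT.induction with
  | ind R ihR =>
  intro hR
  have hRp := mem_PP.1 hR
  -- splitting off the bottom term
  have split : ∀ (L : Subgroup G) (m' : G → Subgroup G → ℤ), WW p L m' → R ≤ L → ∀ g ∈ L,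
      MulAut.conj g • R = R →
      m' g R = 1 - ∑ R' ∈ II p L g with R < R', m' g R' := by
    intro L m' hm' hRL g hg hgR
    have hRI : R ∈ II p L g := mem_II.2 ⟨⟨hRL, hRp.2⟩, hgR⟩
    have h1 := (hm' g hg).2 R hRI
    have h2 : (II p L g).filter (fun R' => R ≤ R')
        = insert R ((II p L g).filter (fun R' => R < R')) := by
      ext S
      simp only [Finset.mem_filter, Finset.mem_insert, le_iff_eq_or_lt]
      constructor
      · rintro ⟨h, rfl | h'⟩
        · exact Or.inl rfl
        · exact Or.inr ⟨h, h'⟩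
      · rintro (rfl | ⟨h, h'⟩)
        · exact ⟨hRI, Or.inl rfl⟩
        · exact ⟨h, Or.inr h'⟩
    rw [h2, Finset.sum_insert (by simp)] at h1
    linarith
  have hzero : ∀ g ∈ K, MulAut.conj g • R ≠ R → m g R = 0 := by
    intro g hg h
    exact (hm g hg).1 R fun h' => h (mem_II.1 h').2
  by_cases hmx : Mx p K R
  · rw [if_pos hmx, nrm, Finset.card_filter]
    push_cast
    refine Finset.sum_congr rfl fun g hg => ?_
    rw [mem_KF] at hg
    split_ifs with h
    · rw [split K m hm hRp.1 g hg h, Finset.sum_eq_zero, sub_zero]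
      intro S hS
      rw [Finset.mem_filter] at hS
      exact absurd hS.2 (hmx.not_gt (mem_II.1 hS.1).1)
    · exact hzero g hg h
  · rw [if_neg hmx]
    by_cases hnorm : ∀ g ∈ K, MulAut.conj g • R = R
    · -- normal case
      have h1 : ∑ g ∈ KF K, ∑ S ∈ PP p K with R < S, m g S = ((KF K).card : ℤ) := by
        rw [Finset.sum_comm]
        have h2 : ∀ S ∈ (PP p K).filter (fun S => R < S), ∑ g ∈ KF K, m g S
            = if Mx p K S then (nrm K S : ℤ) else 0 := by
          intro S hS
          rw [Finset.mem_filter] at hS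
          exact ihR S hS.2 hS.1
        rw [Finset.sum_congr rfl h2, ← Finset.sum_filter, Finset.filter_filter]
        obtain ⟨P, hRP, hP⟩ := mx_exists hRp.1 hRp.2
        have h3 := total hP (fun S => R < S)
        have h4 : (KF K).filter (fun g => R < MulAut.conj g • P) = KF K := by
          refine Finset.filter_true_of_mem fun g hg => ?_
          rw [mem_KF] at hg
          refine lt_of_le_of_ne ?_ ?_
          · rw [← hnorm g hg]
            exact Subgroup.pointwise_smul_le_pointwise_smul_iff.2 hRP
          · intro h
            exact hmx (h ▸ mx_conj_mx hg hP)
        rw [h4] at h3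
        rw [h3]
        push_cast
        refine Finset.sum_congr (Finset.filter_congr fun S _ => and_comm) fun _ _ => rfl
      have h5 : ∑ g ∈ KF K, m g R
          = ∑ g ∈ KF K, (1 - ∑ S ∈ PP p K with R < S, m g S) := by
        refine Finset.sum_congr rfl fun g hg => ?_
        rw [mem_KF] at hg
        rw [split K m hm hRp.1 g hg (hnorm g hg), sum_II_PP hm hg]
      rw [h5, Finset.sum_sub_distrib, h1]
      simp
    · -- non-normal case
      set M := K ⊓ normalizer (R : Set G) with hM
      have hMK : M < K := by
        refine lt_of_le_of_ne inf_le_left fun h => hnorm fun g hg => ?_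
        rw [← h] at hg
        exact mem_norm.1 hg.2
      have hRM : R ≤ M := le_inf hRp.1 Subgroup.le_normalizer
      obtain ⟨m', hm'⟩ := ex_WW p M
      have hmxM : ¬ Mx p M R := by
        intro h
        obtain ⟨P, hRP, hP⟩ := mx_exists hRp.1 hRp.2
        have hlt : R < P := lt_of_le_of_ne hRP fun he => hmx (he ▸ hP)
        have := grow hP.1.2 hlt
        refine h.not_gt ?_ this
        exact ⟨inf_le_inf_right _ hP.1.1, hP.1.2.to_le inf_le_left⟩
      have h1 := ihK M hMK m' hm' R (mem_PP.2 ⟨hRM, hRp.2⟩)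
      rw [if_neg hmxM] at h1
      rw [← h1]
      have h2 : ∑ g ∈ KF M, m g R = ∑ g ∈ KF K, m g R := by
        apply Finset.sum_subset
        · intro g hg
          rw [mem_KF] at hg ⊢
          exact hMK.le hg
        · intro g hg hg'
          rw [mem_KF] at hg hg'
          exact hzero g hg fun h => hg' ⟨hg, mem_norm.2 h⟩
      rw [← h2]
      refine Finset.sum_congr rfl fun g hg => ?_
      rw [mem_KF] at hg
      have hgR : MulAut.conj g • R = R := mem_norm.1 hg.2
      rw [split K m hm hRp.1 g hg.1 hgR, split M m' hm' hRM g hg hgR]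
      congr 1
      refine euler _ _ (fun S => S ⊓ normalizer (R : Set G)) ?_ ?_ _ _ ?_ ?_
      · intro S hS
        rw [Finset.mem_filter, mem_II] at hS ⊢
        obtain ⟨⟨⟨hSK, hSp⟩, hSg⟩, hRS⟩ := hS
        refine ⟨⟨⟨inf_le_inf_right _ hSK, hSp.to_le inf_le_left⟩, ?_⟩, grow hSp hRS⟩
        rw [Subgroup.smul_inf, hSg, Subgroup.conj_smul_eq_self_of_mem hg.2]
      · intro S _ B hB
        rw [Finset.mem_filter, mem_II] at hB
        exact ⟨fun h => h.trans inf_le_left, fun h => le_inf h (hB.1.1.1.trans inf_le_right)⟩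
      · intro B hB
        rw [Finset.mem_filter, mem_II] at hB
        have hBK : B ∈ II p K g := mem_II.2 ⟨⟨hB.1.1.1.trans inf_le_left, hB.1.1.2⟩, hB.1.2⟩
        rw [← (hm g hg.1).2 B hBK, Finset.filter_filter]
        refine Finset.sum_congr (Finset.filter_congr fun S _ => ?_) fun _ _ => rfl
        exact ⟨fun h => h.2, fun h => ⟨hB.2.trans_le h, h⟩⟩
      · intro B hB
        rw [Finset.mem_filter] at hB
        rw [← (hm' g hg).2 B hB.1, Finset.filter_filter]
        refine Finset.sum_congr (Finset.filter_congr fun S _ => ?_) fun _ _ => rfl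
        exact ⟨fun h => h.2, fun h => ⟨hB.2.trans_le h, h⟩⟩

open Classical in
lemma casolo {p : ℕ} [Fact p.Prime] {K P Q : Subgroup G} (hP : Mx p K P) :
    {g ∈ KF K | ∃ R ∈ II p K g, Q ≤ R}.card = {g ∈ KF K | Q ≤ MulAut.conj g • P}.card := by
  obtain ⟨m, hm⟩ := ex_WW p K
  rw [total hP (fun S => Q ≤ S)]
  zify
  rw [Finset.card_filter]
  push_cast
  have h1 : ∀ g ∈ KF K, (if (∃ R ∈ II p K g, Q ≤ R) then (1 : ℤ) else 0)
      = ∑ R ∈ PP p K with Q ≤ R, m g R := by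
    intro g hg
    rw [sum_weight hm (mem_KF.1 hg)]
  rw [Finset.sum_congr rfl h1, Finset.sum_comm]
  have h2 : ∀ S ∈ (PP p K).filter (fun S => Q ≤ S), ∑ g ∈ KF K, m g S
      = if Mx p K S then (nrm K S : ℤ) else 0 := by
    intro S hS
    rw [Finset.mem_filter] at hS
    exact main p K m hm S hS.1
  rw [Finset.sum_congr rfl h2, ← Finset.sum_filter, Finset.filter_filter]
  refine Finset.sum_congr (Finset.filter_congr fun S _ => and_comm) fun _ _ => rfl

lemma card_subn {p : ℕ} [Fact p.Prime] {x : G} (hx : IsPGroup p (zpowers x)) {P : Subgroup G}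
    (hP : Mx p ⊤ P) :
    Nat.card (subnormalizerSet x) = Nat.card {g : G // g⁻¹ * x * g ∈ P} := by
  classical
  have h := casolo (Q := zpowers x) hP
  rw [← Nat.subtype_card (p := fun g => g ∈ subnormalizerSet x) _ ?_,
    ← Nat.subtype_card (p := fun g => g⁻¹ * x * g ∈ P) _ ?_] at h
  · exact h
  · intro g
    rw [Finset.mem_filter, zpowers_le, conj_mem, mem_KF]
    simp
  · intro g
    rw [Finset.mem_filter, subnormalizer_iff hx, mem_KF]
    simp only [mem_II, Subgroup.mem_top, le_top, true_and]
    exact exists_congr fun R => by tauto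

lemma mx_top_of_sylow {p : ℕ} (P : Sylow p G) : Mx p ⊤ (P : Subgroup G) :=
  ⟨⟨le_top, P.isPGroup'⟩, fun _ hS hle => (P.is_maximal' hS.2 hle).le⟩

lemma mx_top_of_subgroupOf {p : ℕ} {H R : Subgroup G} (h : Mx p H R) :
    Mx p ⊤ (R.subgroupOf H) := mx_top_of_sylow (toSyl h)

/-- double counting -/
lemma double (H : Subgroup G) (x : G) (hx : x ∈ H) (P : Subgroup G) [Fintype G] :
    Nat.card H * Nat.card {g : G // g⁻¹ * x * g ∈ P}
      = ∑ g : G, Nat.card {h : H // h⁻¹ * ⟨x, hx⟩ * h ∈ (MulAut.conj g • P).subgroupOf H} := by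
  classical
  have := Fintype.ofFinite H
  have h1 : ∀ g : G, Nat.card {h : H // h⁻¹ * ⟨x, hx⟩ * h ∈ (MulAut.conj g • P).subgroupOf H}
      = ∑ h : H, if ((h : G) * g)⁻¹ * x * (h * g) ∈ P then 1 else 0 := by
    intro g
    rw [Nat.card_eq_fintype_card, Fintype.card_subtype, Finset.card_filter]
    refine Finset.sum_congr rfl fun h _ => ?_
    rw [Subgroup.mem_subgroupOf, conj_mem]
    simp [mul_assoc]
  simp_rw [h1]
  rw [Finset.sum_comm]
  have h2 : ∀ h : H, (∑ g : G, if ((h : G) * g)⁻¹ * x * (h * g) ∈ P then 1 else 0)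
      = Nat.card {g : G // g⁻¹ * x * g ∈ P} := by
    intro h
    rw [Nat.card_eq_fintype_card, Fintype.card_subtype, Finset.card_filter]
    exact Fintype.sum_equiv (Equiv.mulLeft (h : G)) _ _ fun g => rfl
  rw [Finset.sum_congr rfl fun h _ => h2 h]
  simp

end Cas

open scoped Pointwise

theorem stmt2 {G : Type*} [Group G] [Finite G] (p : ℕ) (hp : p.Prime)
    (hpdvd : p ∣ Nat.card G) (H : Subgroup G) (x : G) (hx : x ∈ H)
    (hxp : IsPElement p x) :
    spr x ≤ spr (⟨x, hx⟩ : H) ∧ (H.Normal → spr x = spr (⟨x, hx⟩ : H)) := by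
  classical
  have : Fact p.Prime := ⟨hp⟩
  have := Fintype.ofFinite G
  obtain ⟨k, hk⟩ := hxp
  have hxG : IsPGroup p (zpowers x) := IsPGroup.of_card (n := k) (by rw [Nat.card_zpowers, hk])
  have hxH : IsPGroup p (zpowers (⟨x, hx⟩ : H)) :=
    IsPGroup.of_card (n := k) (by rw [Nat.card_zpowers, Subgroup.orderOf_mk, hk])
  obtain ⟨P, -, hP⟩ := Cas.mx_exists (p := p) (K := (⊤ : Subgroup G)) (Q := ⊥) bot_le IsPGroup.of_bot
  have hd := Cas.double H x hx P
  rw [← Cas.card_subn hxG hP] at hd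
  have hGpos : (0 : ℚ) < Nat.card G := by exact_mod_cast Nat.card_pos
  have hHpos : (0 : ℚ) < Nat.card H := by exact_mod_cast Nat.card_pos
  unfold spr
  constructor
  · rw [div_le_div_iff₀ hGpos hHpos]
    have h : Nat.card H * Nat.card (subnormalizerSet x)
        ≤ Nat.card G * Nat.card (subnormalizerSet (⟨x, hx⟩ : H)) := by
      rw [hd]
      refine (Finset.sum_le_card_nsmul _ _ (Nat.card (subnormalizerSet (⟨x, hx⟩ : H))) ?_).trans ?_
      · intro g _
        have hpg : IsPGroup p ((MulAut.conj g • P).subgroupOf H) :=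
          (Cas.conj_pgroup hP.1.2).comap_of_injective _ H.subtype_injective
        obtain ⟨Q, hle, hQ⟩ := Cas.mx_exists (K := ⊤) le_top hpg
        rw [Cas.card_subn hxH hQ]
        exact Nat.card_le_card_of_injective (Subtype.map id fun h hh => hle hh)
          (Subtype.map_injective _ Function.injective_id)
      · rw [Finset.card_univ, smul_eq_mul, Nat.card_eq_fintype_card (α := G)]
    have h' : (Nat.card H : ℚ) * Nat.card (subnormalizerSet x)
        ≤ Nat.card G * Nat.card (subnormalizerSet (⟨x, hx⟩ : H)) := by exact_mod_cast h
    linarith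
  · intro hN
    rw [div_eq_div_iff hGpos.ne' hHpos.ne']
    have h : Nat.card H * Nat.card (subnormalizerSet x)
        = Nat.card G * Nat.card (subnormalizerSet (⟨x, hx⟩ : H)) := by
      rw [hd]
      rw [Finset.sum_congr rfl (g := fun _ => Nat.card (subnormalizerSet (⟨x, hx⟩ : H)))]
      · rw [Finset.sum_const, Finset.card_univ, smul_eq_mul, Nat.card_eq_fintype_card (α := G)]
      · intro g _
        have h1 : Cas.Mx p H ((MulAut.conj g • P) ⊓ H) :=
          Cas.mx_normal ⟨le_top, Subgroup.normal_subgroupOf⟩ (Cas.mx_conj_mx (Subgroup.mem_top g) hP)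
        have h2 := Cas.mx_top_of_subgroupOf h1
        rw [Subgroup.inf_subgroupOf_right] at h2
        rw [Cas.card_subn hxH h2]
    have h' : (Nat.card H : ℚ) * Nat.card (subnormalizerSet x)
        = Nat.card G * Nat.card (subnormalizerSet (⟨x, hx⟩ : H)) := by exact_mod_cast h
    linarith
end

section
/- Let G be a finite group, p a prime dividing |G|, and x a p-element of G. Then spr_G(x) = λ_G(x)/n_p(G), where λ_G(x) is the number of Sylow p-subgroups of G containing x and n_p(G) is the total number of Sylow p-subgroups of G. -/
open Subgroup

theorem exists_mu {α : Type*} [PartialOrder α] [Fintype α] (a : α) [DecidableLE α] :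
    ∃ μ : α → ℤ, μ a = 1 ∧ ∀ b, a < b →
      ∑ x ∈ Finset.univ.filter (fun x => a ≤ x ∧ x ≤ b), μ x = 0 := by
  classical
  let : LocallyFiniteOrder α := Fintype.toLocallyFiniteOrder
  refine ⟨fun x => IncidenceAlgebra.mu ℤ a x, IncidenceAlgebra.mu_self a, fun b hb => ?_⟩
  have h := IncidenceAlgebra.sum_Icc_mu_right (𝕜 := ℤ) a b
  rw [if_neg hb.ne] at h
  rw [← h]
  refine Finset.sum_congr ?_ (fun _ _ => rfl)
  ext x
  simp

theorem contract_fiber {α : Type*} [Lattice α] [Fintype α] [DecidableLE α] [DecidableEq α]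
    (a n : α) (han : a < n) (μ : α → ℤ)
    (hμ : ∀ b, a < b → ∑ x ∈ Finset.univ.filter (fun x => a ≤ x ∧ x ≤ b), μ x = 0) (L : α) :
    ∑ x ∈ Finset.univ.filter (fun x => a ≤ x ∧ x ⊔ n = L), μ x = 0 := by
  induction L using WellFoundedLT.induction with
  | ind L ih =>
    by_cases hn : n ≤ L
    · have h1 := hμ L (han.trans_le hn)
      have h2 : ∑ x ∈ Finset.univ.filter (fun x => a ≤ x ∧ x ≤ L), μ x =
          ∑ M ∈ Finset.univ.filter (fun M => M ≤ L),
            ∑ x ∈ Finset.univ.filter (fun x => a ≤ x ∧ x ⊔ n = M), μ x := by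
        rw [← Finset.sum_fiberwise_of_maps_to (s := Finset.univ.filter (fun x => a ≤ x ∧ x ≤ L))
          (t := Finset.univ.filter (fun M => M ≤ L)) (g := fun x => x ⊔ n)]
        · refine Finset.sum_congr rfl fun M hM => Finset.sum_congr ?_ fun _ _ => rfl
          ext x
          simp only [Finset.mem_filter, Finset.mem_univ, true_and] at hM ⊢
          constructor
          · rintro ⟨⟨h, _⟩, h'⟩
            exact ⟨h, h'⟩
          · rintro ⟨h, h'⟩
            exact ⟨⟨h, le_sup_left.trans (h'.le.trans hM)⟩, h'⟩
        · intro x hx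
          simp only [Finset.mem_filter, Finset.mem_univ, true_and] at hx ⊢
          exact sup_le hx.2 hn
      rw [h2, Finset.sum_eq_single L] at h1
      · exact h1
      · intro M hM hne
        simp only [Finset.mem_filter, Finset.mem_univ, true_and] at hM
        exact ih M (lt_of_le_of_ne hM hne)
      · intro h
        simp at h
    · rw [Finset.filter_false_of_mem]
      · simp
      · rintro x - ⟨_, h⟩
        exact hn (h ▸ le_sup_right)

theorem contract {α : Type*} [Lattice α] [Fintype α] [DecidableLE α] [DecidableEq α]
    (a n : α) (han : a < n) (μ : α → ℤ)
    (hμ : ∀ b, a < b → ∑ x ∈ Finset.univ.filter (fun x => a ≤ x ∧ x ≤ b), μ x = 0)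
    (Y : Finset α) (hYa : ∀ x ∈ Y, a ≤ x) (hYd : ∀ x ∈ Y, ∀ y, a ≤ y → y ≤ x → y ∈ Y)
    (hYn : ∀ x ∈ Y, x ⊔ n ∈ Y) : ∑ x ∈ Y, μ x = 0 := by
  rw [← Finset.sum_fiberwise_of_maps_to (s := Y) (t := Y) (g := fun x => x ⊔ n) hYn]
  refine Finset.sum_eq_zero fun L hL => ?_
  rw [← contract_fiber a n han μ hμ L]
  refine Finset.sum_congr ?_ fun _ _ => rfl
  ext x
  simp only [Finset.mem_filter, Finset.mem_univ, true_and]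
  constructor
  · rintro ⟨h, h'⟩
    exact ⟨hYa x h, h'⟩
  · rintro ⟨h, h'⟩
    exact ⟨hYd L hL x h (h' ▸ le_sup_left), h'⟩

/-- `K` lies in a `p`-subgroup normalized by `g`. -/
def PNorm {G : Type*} [Group G] (p : ℕ) (K : Subgroup G) (g : G) : Prop :=
  ∃ L : Subgroup G, IsPGroup p L ∧ K ≤ L ∧ g ∈ normalizer (L : Set G)

theorem lt_inf_normalizer {G : Type*} [Group G] [Finite G] {p : ℕ} [Fact p.Prime]
    {H L : Subgroup G} (hL : IsPGroup p L) (h : H < L) : H < L ⊓ normalizer (H : Set G) := by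
  have : Group.IsNilpotent L := hL.isNilpotent
  have hc := Group.normalizerCondition_of_isNilpotent (G := L) (H.subgroupOf L) (by
    rw [lt_top_iff_ne_top, Ne, subgroupOf_eq_top]
    exact not_le_of_gt h)
  refine lt_of_le_of_ne (le_inf h.le le_normalizer) fun he => ?_
  obtain ⟨y, hy, hy'⟩ := SetLike.exists_of_lt hc
  apply hy'
  rw [mem_subgroupOf]
  rw [he]
  refine ⟨y.2, ?_⟩
  rw [← subgroupOf_normalizer_eq h.le] at hy
  exact hy

theorem subnormal_pgroup {G : Type*} [Group G] [Finite G] {p : ℕ} [Fact p.Prime]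
    {H L : Subgroup G} (hL : IsPGroup p L) (h : H ≤ L) : IsSubnormalIn H L := by
  induction H using WellFoundedGT.induction with
  | ind H ih =>
    rcases h.eq_or_lt with rfl | h
    · exact Relation.ReflTransGen.refl
    · have h1 := lt_inf_normalizer hL h
      refine Relation.ReflTransGen.head ⟨h1.le, ?_⟩ (ih _ h1 inf_le_left)
      rw [normal_subgroupOf_iff_le_normalizer h1.le]
      exact inf_le_right

theorem exists_pnormal {G : Type*} [Group G] [Finite G] {p : ℕ} [Fact p.Prime]
    {H K : Subgroup G} (hH : IsPGroup p H) (h : IsSubnormalIn H K) :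
    ∃ L : Subgroup G, IsPGroup p L ∧ H ≤ L ∧ L ≤ K ∧ K ≤ normalizer (L : Set G) := by
  induction h with
  | refl => exact ⟨H, hH, le_rfl, le_rfl, le_normalizer⟩
  | @tail K J _ hKJ ih =>
    obtain ⟨hle, hn⟩ := hKJ
    rw [normal_subgroupOf_iff_le_normalizer hle] at hn
    obtain ⟨L, hL⟩ := (Set.toFinite {L : Subgroup G | IsPGroup p L ∧ H ≤ L ∧ L ≤ K ∧
      K ≤ normalizer (L : Set G)}).exists_maximal ih
    obtain ⟨⟨hp, hHL, hLK, hKL⟩, hmax⟩ := hL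
    refine ⟨L, hp, hHL, hLK.trans hle, ?_⟩
    rw [le_normalizer_iff]
    intro j hj
    rw [le_normalizer_iff] at hn hKL
    let L' := L.map (MulAut.conj j).toMonoidHom
    have hL'K : L' ≤ K := by
      rintro _ ⟨l, hl, rfl⟩
      exact hn j hj l (hLK hl)
    have hKL' : K ≤ normalizer (L' : Set G) := by
      rw [le_normalizer_iff]
      rintro k hk _ ⟨l, hl, rfl⟩
      refine ⟨(j⁻¹ * k * j) * l * (j⁻¹ * k * j)⁻¹, hKL _ ?_ l hl, ?_⟩
      · have := hn j⁻¹ (J.inv_mem hj) k hk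
        rwa [inv_inv] at this
      · simp [MulAut.conj_apply, mul_assoc]
    have hKLn : K ≤ normalizer (L : Set G) := by
      rwa [le_normalizer_iff]
    have hs : L ⊔ L' ≤ L := hmax ⟨hp.to_sup_of_normal_right' (hp.map _) (hLK.trans hKL'),
      hHL.trans le_sup_left, sup_le hLK hL'K, by
        rw [le_normalizer_iff]
        intro k hk m hm
        have hc : L ⊔ L' ≤ (L ⊔ L').comap (MulAut.conj k).toMonoidHom :=
          sup_le (fun x hx => mem_sup_left (hKL k hk x hx))
            (fun x hx => mem_sup_right (le_normalizer_iff.1 hKL' k hk x hx))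
        exact hc hm⟩ le_sup_left
    intro l hl
    exact hs (mem_sup_right ⟨l, hl, rfl⟩)

theorem subnormal_iff {G : Type*} [Group G] [Finite G] {p : ℕ} [Fact p.Prime]
    {x : G} (hx : IsPGroup p (zpowers x)) (g : G) :
    IsSubnormalIn (zpowers x) (zpowers x ⊔ zpowers g) ↔ PNorm p (zpowers x) g := by
  constructor
  · intro h
    obtain ⟨L, h1, h2, _, h4⟩ := exists_pnormal hx h
    exact ⟨L, h1, h2, h4 (mem_sup_right (mem_zpowers g))⟩
  · rintro ⟨L, h1, h2, h3⟩
    have hJ : zpowers x ⊔ zpowers g ≤ normalizer (L : Set G) :=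
      sup_le (h2.trans le_normalizer) (by rwa [zpowers_le])
    have hp : IsPGroup p (L ⊓ (zpowers x ⊔ zpowers g) : Subgroup G) := h1.to_le inf_le_left
    refine Relation.ReflTransGen.tail (subnormal_pgroup hp (le_inf h2 le_sup_left))
      ⟨inf_le_right, ?_⟩
    rw [normal_subgroupOf_iff_le_normalizer inf_le_right, le_normalizer_iff]
    intro j hj l hl
    exact ⟨le_normalizer_iff.1 hJ j hj l hl.1, Subgroup.mul_mem _ (Subgroup.mul_mem _ hj hl.2) (Subgroup.inv_mem _ hj)⟩

theorem PNorm.mono {G : Type*} [Group G] {p : ℕ} {H K : Subgroup G} {g : G} (h : H ≤ K)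
    (hK : PNorm p K g) : PNorm p H g := by
  obtain ⟨L, h1, h2, h3⟩ := hK
  exact ⟨L, h1, h.trans h2, h3⟩

theorem pnorm_subgroupOf {G : Type*} [Group G] {p : ℕ} {N K : Subgroup G} (hK : K ≤ N) (g : N) :
    PNorm p (K.subgroupOf N) g ↔ PNorm p K (g : G) := by
  constructor
  · rintro ⟨L, h1, h2, h3⟩
    refine ⟨L.map N.subtype, h1.map _, ?_, ?_⟩
    · intro k hk
      exact ⟨⟨k, hK hk⟩, h2 (mem_subgroupOf.2 hk), rfl⟩
    · exact le_normalizer_map N.subtype (mem_map_of_mem N.subtype h3)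
  · rintro ⟨L, h1, h2, h3⟩
    refine ⟨L.subgroupOf N, h1.comap_subtype, ?_, ?_⟩
    · exact fun k hk => h2 hk
    · exact le_normalizer_comap N.subtype (mem_comap.2 h3)

open Classical in
theorem sum_syl {G : Type*} [Group G] [Fintype (Subgroup G)] {p : ℕ} {ι : Type*} [Fintype ι]
    (Q : ι → Subgroup G) (hQ : ∀ i, IsPGroup p (Q i)) (H N : Subgroup G)
    (hlt : ∀ i, H ≤ Q i → H < Q i ⊓ N) (μ : Subgroup G → ℤ)
    (hμ : ∀ b, H < b → ∑ x ∈ Finset.univ.filter (fun x => H ≤ x ∧ x ≤ b), μ x = 0) :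
    ∑ K ∈ Finset.univ.filter (fun K => H ≤ K ∧ K ≤ N ∧ IsPGroup p K),
      μ K * (Nat.card {i // K ≤ Q i} : ℤ) = 0 := by
  have h1 : ∀ K : Subgroup G, μ K * (Nat.card {i // K ≤ Q i} : ℤ) =
      ∑ i, if K ≤ Q i then μ K else 0 := by
    intro K
    rw [Nat.card_eq_fintype_card, Fintype.card_subtype, ← Finset.sum_filter, Finset.sum_const,
      nsmul_eq_mul, mul_comm]
  simp_rw [h1]
  rw [Finset.sum_comm]
  refine Finset.sum_eq_zero fun i _ => ?_
  rw [← Finset.sum_filter, Finset.filter_filter]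
  by_cases hi : H ≤ Q i
  · rw [← hμ _ (hlt i hi)]
    refine Finset.sum_congr ?_ fun _ _ => rfl
    ext K
    simp only [Finset.mem_filter, Finset.mem_univ, true_and, le_inf_iff]
    constructor
    · rintro ⟨⟨a, b, c⟩, d⟩
      exact ⟨a, d, b⟩
    · rintro ⟨a, d, b⟩
      exact ⟨⟨a, b, (hQ i).to_le d⟩, d⟩
  · rw [Finset.filter_false_of_mem]
    · simp
    · rintro K - ⟨⟨a, _⟩, d⟩
      exact hi (a.trans d)

open Classical in
theorem sum_out {G : Type*} [Group G] [Finite G] [Fintype (Subgroup G)] {p : ℕ} [Fact p.Prime]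
    (H : Subgroup G) (μ : Subgroup G → ℤ)
    (hμ : ∀ b, H < b → ∑ x ∈ Finset.univ.filter (fun x => H ≤ x ∧ x ≤ b), μ x = 0)
    (g : G) (hg : g ∉ normalizer (H : Set G)) :
    ∑ K ∈ Finset.univ.filter (fun K => H ≤ K ∧ K ≤ normalizer (H : Set G) ∧ IsPGroup p K),
      (if PNorm p K g then μ K else 0) = 0 := by
  rw [← Finset.sum_filter, Finset.filter_filter]
  by_cases hH : PNorm p H g
  swap
  · rw [Finset.filter_false_of_mem]
    · simp
    · rintro K - ⟨⟨a, _⟩, d⟩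
      exact hH (d.mono a)
  set M : Subgroup G := sInf {L | H ≤ L ∧ g ∈ normalizer (L : Set G)} with hM
  have hHM : H ≤ M := le_sInf fun L hL => hL.1
  have hgM : g ∈ normalizer (M : Set G) := by
    rw [mem_normalizer_iff]
    intro h
    simp only [hM, mem_sInf]
    refine forall₂_congr fun L hL => ?_
    exact mem_normalizer_iff.1 hL.2 h
  have hlt : H < M := lt_of_le_of_ne hHM fun he => hg (by rw [he]; exact hgM)
  have hMp : IsPGroup p M := by
    obtain ⟨L, h1, h2, h3⟩ := hH
    exact h1.to_le (sInf_le ⟨h2, h3⟩)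
  refine contract H (M ⊓ normalizer (H : Set G)) (lt_inf_normalizer hMp hlt) μ hμ _ ?_ ?_ ?_
  · intro x hx
    simp only [Finset.mem_filter] at hx
    exact hx.2.1.1
  · intro x hx y hy hyx
    simp only [Finset.mem_filter, Finset.mem_univ, true_and] at hx ⊢
    obtain ⟨⟨a, b, c⟩, d⟩ := hx
    exact ⟨⟨hy, hyx.trans b, c.to_le hyx⟩, d.mono hyx⟩
  · intro x hx
    simp only [Finset.mem_filter, Finset.mem_univ, true_and] at hx ⊢
    obtain ⟨⟨a, b, c⟩, L, h1, h2, h3⟩ := hx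
    have hML : M ≤ L := sInf_le ⟨a.trans h2, h3⟩
    have hle : x ⊔ (M ⊓ normalizer (H : Set G)) ≤ L := sup_le h2 (inf_le_left.trans hML)
    exact ⟨⟨a.trans le_sup_left, sup_le b inf_le_right, h1.to_le hle⟩, L, h1, hle, h3⟩

theorem main_count (p : ℕ) [Fact p.Prime] (n : ℕ) :
    ∀ {G : Type*} [Group G] [Finite G], Nat.card G = n → ∀ (H : Subgroup G), IsPGroup p H →
      Nat.card {g : G // PNorm p H g} * Nat.card (Sylow p G) =
        Nat.card {Q : Sylow p G // H ≤ (Q : Subgroup G)} * Nat.card G := by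
  classical
  induction n using Nat.strong_induction_on with
  | _ n ihG =>
  intro G _ _ hn H
  induction H using WellFoundedGT.induction with
  | ind H ihH =>
  intro hH
  by_cases hN : normalizer (H : Set G) = ⊤
  · have hnorm : H.Normal := normalizer_eq_top_iff.1 hN
    have e1 : Nat.card {g : G // PNorm p H g} = Nat.card G :=
      Nat.card_congr (Equiv.subtypeUnivEquiv fun g => ⟨H, hH, le_rfl, by rw [hN]; trivial⟩)
    have e2 : Nat.card {Q : Sylow p G // H ≤ (Q : Subgroup G)} = Nat.card (Sylow p G) :=
      Nat.card_congr (Equiv.subtypeUnivEquiv fun Q => hH.le_sylow_of_normal Q)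
    rw [e1, e2, mul_comm]
  by_cases hS : ∃ Q : Sylow p G, (Q : Subgroup G) = H
  · obtain ⟨Q, rfl⟩ := hS
    have e1 : Nat.card {g : G // PNorm p (Q : Subgroup G) g} =
        Nat.card (normalizer ((Q : Subgroup G) : Set G)) := by
      refine Nat.card_congr (Equiv.subtypeEquivRight fun g => ?_)
      constructor
      · rintro ⟨L, h1, h2, h3⟩
        rwa [Q.is_maximal' h1 h2] at h3
      · intro h
        exact ⟨Q, hH, le_rfl, h⟩
    have e2 : Nat.card {R : Sylow p G // (Q : Subgroup G) ≤ (R : Subgroup G)} = 1 := by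
      rw [Nat.card_eq_one_iff_unique]
      refine ⟨⟨fun a b => ?_⟩, ⟨⟨Q, le_rfl⟩⟩⟩
      apply Subtype.ext
      apply Sylow.ext
      rw [Q.is_maximal' a.1.isPGroup' a.2, Q.is_maximal' b.1.isPGroup' b.2]
    rw [e1, e2, Q.card_eq_index_normalizer, one_mul]
    exact card_mul_index _
  have : Fintype (Subgroup G) := Fintype.ofFinite _
  have : Fintype G := Fintype.ofFinite _
  have : Fintype (Sylow p G) := Fintype.ofFinite _
  obtain ⟨μ, hμ1, hμ⟩ := exists_mu H
  set N : Subgroup G := normalizer (H : Set G) with hNdef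
  have : Fintype (Sylow p N) := Fintype.ofFinite _
  have hHN : H ≤ N := le_normalizer
  have hnotS : ∀ Q : Sylow p G, H ≤ Q → H < (Q : Subgroup G) := fun Q h =>
    lt_of_le_of_ne h fun he => hS ⟨Q, he.symm⟩
  set F : Finset (Subgroup G) := Finset.univ.filter (fun K => H ≤ K ∧ K ≤ N ∧ IsPGroup p K)
    with hF
  have hB : ∑ K ∈ F, μ K * (Nat.card {Q : Sylow p G // K ≤ (Q : Subgroup G)} : ℤ) = 0 :=
    sum_syl (fun Q : Sylow p G => (Q : Subgroup G)) (fun Q => Q.isPGroup') H N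
      (fun Q h => lt_inf_normalizer Q.isPGroup' (hnotS Q h)) μ hμ
  have hNlt : Nat.card N < n := by
    rw [← hn]
    exact lt_of_le_of_ne (card_le_card_group N) fun he => hN (eq_top_of_card_eq N he)
  -- the Sylow subgroups of `N` are strictly bigger than `H`
  have hB' : ∑ K ∈ F, μ K *
      (Nat.card {Q : Sylow p N // K ≤ (Q : Subgroup N).map N.subtype} : ℤ) = 0 := by
    refine sum_syl (fun Q : Sylow p N => (Q : Subgroup N).map N.subtype)
      (fun Q => Q.isPGroup'.map _) H N (fun Q h => ?_) μ hμ
    have hQN : (Q : Subgroup N).map N.subtype ≤ N := map_subtype_le _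
    rw [inf_eq_left.2 hQN]
    refine lt_of_le_of_ne h fun he => ?_
    obtain ⟨R, hR⟩ := hH.exists_le_sylow
    have h1 := lt_inf_normalizer R.isPGroup' (hnotS R hR)
    have hp : IsPGroup p ((R : Subgroup G) ⊓ N : Subgroup G) := R.isPGroup'.to_le inf_le_left
    have h2 : (Q : Subgroup N) ≤ ((R : Subgroup G) ⊓ N).subgroupOf N := by
      intro q hq
      have : (q : G) ∈ H := by
        rw [he]
        exact mem_map_of_mem N.subtype hq
      exact h1.le this
    have h3 := Q.is_maximal' (hp.comap_subtype (K := N)) h2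
    have h4 : ((R : Subgroup G) ⊓ N) = H := by
      rw [he, ← h3]
      exact (map_subgroupOf_eq_of_le inf_le_right).symm
    exact h1.ne h4.symm
  have hAin : ∑ K ∈ F, μ K * (Nat.card {g : N // PNorm p K (g : G)} : ℤ) = 0 := by
    have hpos : (Nat.card (Sylow p N) : ℤ) ≠ 0 := by
      exact_mod_cast Nat.card_pos.ne'
    apply mul_right_cancel₀ hpos
    rw [zero_mul, Finset.sum_mul]
    have : ∀ K ∈ F, μ K * (Nat.card {g : N // PNorm p K (g : G)} : ℤ) * Nat.card (Sylow p N) =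
        μ K * (Nat.card {Q : Sylow p N // K ≤ (Q : Subgroup N).map N.subtype} : ℤ) *
          Nat.card N := by
      intro K hK
      simp only [hF, Finset.mem_filter, Finset.mem_univ, true_and] at hK
      obtain ⟨_, hKN, hKp⟩ := hK
      have h := ihG _ hNlt (G := N) rfl (K.subgroupOf N) hKp.comap_subtype
      have e1 : Nat.card {g : N // PNorm p K (g : G)} =
          Nat.card {g : N // PNorm p (K.subgroupOf N) g} :=
        Nat.card_congr (Equiv.subtypeEquivRight fun g => (pnorm_subgroupOf hKN g).symm)
      have e2 : Nat.card {Q : Sylow p N // K ≤ (Q : Subgroup N).map N.subtype} =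
          Nat.card {Q : Sylow p N // K.subgroupOf N ≤ (Q : Subgroup N)} := by
        refine Nat.card_congr (Equiv.subtypeEquivRight fun Q => ?_)
        constructor
        · intro hle k hk
          obtain ⟨q, hq, hqk⟩ := hle (mem_subgroupOf.1 hk)
          have : q = k := Subtype.ext hqk
          exact this ▸ hq
        · intro hle k hk
          exact ⟨⟨k, hKN hk⟩, hle (mem_subgroupOf.2 hk), rfl⟩
      rw [e1, e2, mul_assoc, mul_assoc]
      congr 1
      exact_mod_cast h
    rw [Finset.sum_congr rfl this, ← Finset.sum_mul, hB', zero_mul]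
  have hA : ∑ K ∈ F, μ K * (Nat.card {g : G // PNorm p K g} : ℤ) = 0 := by
    have h1 : ∀ K : Subgroup G, μ K * (Nat.card {g : G // PNorm p K g} : ℤ) =
        μ K * (Nat.card {g : N // PNorm p K (g : G)} : ℤ) +
          ∑ g : {g : G // ¬ g ∈ N}, if PNorm p K (g : G) then μ K else 0 := by
      intro K
      have e1 : μ K * (Nat.card {g : G // PNorm p K g} : ℤ) =
          ∑ g : G, if PNorm p K g then μ K else 0 := by
        rw [Nat.card_eq_fintype_card, Fintype.card_subtype, ← Finset.sum_filter,
          Finset.sum_const, nsmul_eq_mul, mul_comm]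
      have e2 : μ K * (Nat.card {g : N // PNorm p K (g : G)} : ℤ) =
          ∑ g : {g : G // g ∈ N}, if PNorm p K (g : G) then μ K else 0 := by
        rw [Nat.card_eq_fintype_card, Fintype.card_subtype, ← Finset.sum_filter,
          Finset.sum_const, nsmul_eq_mul, mul_comm]
      rw [e1, e2]
      exact (Fintype.sum_subtype_add_sum_subtype (fun g => g ∈ N) _).symm
    rw [Finset.sum_congr rfl fun K _ => h1 K, Finset.sum_add_distrib, hAin, zero_add,
      Finset.sum_comm]
    exact Finset.sum_eq_zero fun g _ => sum_out H μ hμ g g.2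
  have hHF : H ∈ F := by
    simp only [hF, Finset.mem_filter, Finset.mem_univ, true_and]
    exact ⟨le_rfl, hHN, hH⟩
  have hsum : ∑ K ∈ F, μ K * ((Nat.card {g : G // PNorm p K g} : ℤ) * Nat.card (Sylow p G) -
      (Nat.card {Q : Sylow p G // K ≤ (Q : Subgroup G)} : ℤ) * Nat.card G) = 0 := by
    simp_rw [mul_sub, ← mul_assoc]
    rw [Finset.sum_sub_distrib, ← Finset.sum_mul, ← Finset.sum_mul, hA, hB]
    simp
  rw [Finset.sum_eq_single H] at hsum
  · rw [hμ1, one_mul, sub_eq_zero] at hsum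
    exact_mod_cast hsum
  · intro K hK hne
    simp only [hF, Finset.mem_filter, Finset.mem_univ, true_and] at hK
    have h := ihH K (lt_of_le_of_ne hK.1 hne.symm) hK.2.2
    have h' : (Nat.card {g : G // PNorm p K g} : ℤ) * Nat.card (Sylow p G) =
      (Nat.card {Q : Sylow p G // K ≤ (Q : Subgroup G)} : ℤ) * Nat.card G := by
      exact_mod_cast h
    rw [h', sub_self, mul_zero]
  · exact fun h => absurd hHF h

theorem stmt3 {G : Type*} [Group G] [Finite G] (p : ℕ) [Fact p.Prime]
    (hpdvd : p ∣ Nat.card G) (x : G) (hxp : IsPElement p x) :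
    spr x = (Nat.card {Q : Sylow p G | x ∈ (Q : Subgroup G)} : ℚ) /
      (Nat.card (Sylow p G) : ℚ) := by
  have hx : IsPGroup p (zpowers x) := by
    obtain ⟨k, hk⟩ := hxp
    exact IsPGroup.of_card (n := k) (by rw [Nat.card_zpowers, hk])
  have h := main_count p _ (G := G) rfl (zpowers x) hx
  have e1 : Nat.card (subnormalizerSet x) = Nat.card {g : G // PNorm p (zpowers x) g} :=
    Nat.card_congr (Equiv.subtypeEquivRight fun g => subnormal_iff hx g)
  have e2 : Nat.card {Q : Sylow p G | x ∈ (Q : Subgroup G)} =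
      Nat.card {Q : Sylow p G // zpowers x ≤ (Q : Subgroup G)} :=
    Nat.card_congr (Equiv.subtypeEquivRight fun Q => zpowers_le.symm)
  have h1 : (Nat.card G : ℚ) ≠ 0 := by exact_mod_cast Nat.card_pos.ne'
  have h2 : (Nat.card (Sylow p G) : ℚ) ≠ 0 := by exact_mod_cast Nat.card_pos.ne'
  rw [spr, e1, e2, div_eq_div_iff h1 h2]
  exact_mod_cast h
end

section
/- Let p be a prime, H a finite group, and G = (H_1 × ⋯ × H_p) ⋊ ⟨x⟩, where each H_i ≅ H and x has order p and cyclically permutes the factors H_1, …, H_p. Then spr_G(x) ≤ 1/n_p(H)^{p-1}, where n_p(H) is the number of Sylow p-subgroups of H. -/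
open Subgroup

/-- The cyclic-shift automorphism action of `ZMod p` on `ZMod p → H`:
`(shiftHom p H c) f i = f (i + c)`. -/
def shiftHom (p : ℕ) (H : Type*) [Group H] :
    Multiplicative (ZMod p) →* MulAut (ZMod p → H) :=
  MonoidHom.mk'
    (fun c => MulEquiv.arrowCongr (Equiv.addRight c.toAdd).symm (MulEquiv.refl H))
    (by
      intro a b
      ext f i
      simp [MulEquiv.arrowCongr, add_assoc])

section helpers
open scoped Classical

theorem exists_moebius {L : Type*} [Lattice L] [Fintype L] (U : L) :
    ∃ c : L → ℤ, ∀ X, U < X → ∑ R with U < R ∧ R ≤ X, c R = 1 := by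
  let _ : LocallyFiniteOrder L := Fintype.toLocallyFiniteOrder
  refine ⟨fun R => - IncidenceAlgebra.mu ℤ U R, fun X hX => ?_⟩
  have h1 := IncidenceAlgebra.sum_Icc_mu_right (𝕜 := ℤ) U X
  rw [if_neg hX.ne, Finset.Icc_eq_cons_Ioc hX.le, Finset.sum_cons] at h1
  have h2 : (Finset.univ.filter fun R => U < R ∧ R ≤ X) = Finset.Ioc U X := by
    ext; simp
  rw [h2, Finset.sum_neg_distrib]
  have h3 : IncidenceAlgebra.mu ℤ U U = 1 := by simp
  linarith

theorem sum_moebius {L : Type*} [Lattice L] [Fintype L] {U : L} {c : L → ℤ}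
    (hc : ∀ X, U < X → ∑ R with U < R ∧ R ≤ X, c R = 1) {R₀ : L} (hR₀ : U < R₀) :
    ∀ (n : ℕ) (F : Finset L), F.card = n → R₀ ∈ F → (∀ R ∈ F, U < R) →
      (∀ R ∈ F, ∀ R', U < R' → R' ≤ R → R' ∈ F) → (∀ R ∈ F, R ⊔ R₀ ∈ F) →
      ∑ R ∈ F, c R = 1 := by
  intro n
  induction n using Nat.strong_induction_on with
  | _ n ih =>
  intro F hn h0 hU hdown hsup
  by_cases hall : ∀ R ∈ F, R ≤ R₀
  · rw [← hc R₀ hR₀]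
    refine Finset.sum_congr ?_ fun _ _ => rfl
    ext R
    simp only [Finset.mem_filter, Finset.mem_univ, true_and]
    exact ⟨fun h => ⟨hU R h, hall R h⟩, fun h => hdown R₀ h0 R h.1 h.2⟩
  push Not at hall
  obtain ⟨R₁, hR₁, hR₁'⟩ := hall
  obtain ⟨M, hle, hM⟩ := F.exists_le_maximal hR₁
  have hMF : M ∈ F := hM.prop
  have hMR : R₀ ≤ M := by
    have := hM.le_of_ge (hsup M hMF) le_sup_left
    exact le_sup_right.trans this
  have hne : M ≠ R₀ := by rintro rfl; exact hR₁' hle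
  have e1 := ih (F.filter fun R => R ⊔ R₀ ≠ M).card (by
      rw [← hn]
      apply Finset.card_lt_card
      rw [Finset.filter_ssubset]
      exact ⟨M, hMF, by simpa using hMR⟩) _ rfl (by simp [h0, hne.symm])
    (fun R h => hU R (Finset.mem_filter.1 h).1)
    (by
      intro R hR R' h1 h2
      rw [Finset.mem_filter] at hR ⊢
      refine ⟨hdown R hR.1 R' h1 h2, fun h => hR.2 ?_⟩
      refine le_antisymm (hM.le_of_ge (hsup R hR.1) ?_) ?_ <;>
        exact h ▸ sup_le_sup_right h2 _)
    (by
      intro R hR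
      rw [Finset.mem_filter] at hR ⊢
      exact ⟨hsup R hR.1, by simpa using hR.2⟩)
  have e2 := ih (F.filter fun R => R ≤ M ∧ R ⊔ R₀ ≠ M).card (by
      rw [← hn]
      apply Finset.card_lt_card
      rw [Finset.filter_ssubset]
      exact ⟨M, hMF, by simpa using hMR⟩) _ rfl (by simp [h0, hne.symm, hMR])
    (fun R h => hU R (Finset.mem_filter.1 h).1)
    (by
      intro R hR R' h1 h2
      rw [Finset.mem_filter] at hR ⊢
      refine ⟨hdown R hR.1 R' h1 h2, h2.trans hR.2.1, fun h => hR.2.2 ?_⟩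
      refine le_antisymm (hM.le_of_ge (hsup R hR.1) ?_) ?_ <;>
        exact h ▸ sup_le_sup_right h2 _)
    (by
      intro R hR
      rw [Finset.mem_filter] at hR ⊢
      exact ⟨hsup R hR.1, sup_le hR.2.1 hMR, by simpa using hR.2.2⟩)
  have e3 := hc M (hU M hMF)
  have e4 : (Finset.univ.filter fun R => U < R ∧ R ≤ M) = F.filter (fun R => R ≤ M) := by
    ext R
    simp only [Finset.mem_filter, Finset.mem_univ, true_and]
    exact ⟨fun h => ⟨hdown M hMF R h.1 h.2, h.2⟩, fun h => ⟨hU R h.1, h.2⟩⟩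
  rw [e4, ← Finset.sum_filter_add_sum_filter_not _ (fun R => R ⊔ R₀ ≠ M),
    Finset.filter_filter, Finset.filter_filter, e2] at e3
  rw [← Finset.sum_filter_add_sum_filter_not F (fun R => R ⊔ R₀ ≠ M), e1]
  have e5 : (F.filter fun R => ¬ (R ⊔ R₀ ≠ M)) = F.filter fun R => R ≤ M ∧ ¬ (R ⊔ R₀ ≠ M) := by
    ext R
    simp only [Finset.mem_filter, not_not]
    exact ⟨fun h => ⟨h.1, h.2 ▸ le_sup_left, h.2⟩, fun h => ⟨h.1, h.2.2⟩⟩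
  rw [e5]
  linarith

variable {G : Type*} [Group G]

/-- Maximal `p`-subgroups of `K`. -/
def IsSyl (p : ℕ) (K P : Subgroup G) : Prop :=
  Maximal (fun Q : Subgroup G => IsPGroup p Q ∧ Q ≤ K) P

/-- `U` lies in an `h`-invariant `p`-subgroup. -/
def SubN (p : ℕ) (h : G) (U : Subgroup G) : Prop :=
  ∃ Q : Subgroup G, IsPGroup p Q ∧ U ≤ Q ∧ h ∈ normalizer (Q : Set G)

/-- Number of elements of `K` subnormalizing `U`. -/
noncomputable def cntF [Fintype G] (p : ℕ) (K U : Subgroup G) : ℤ :=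
  ∑ h : G, if h ∈ K ∧ SubN p h U then 1 else 0

/-- Number of pairs `(h, P)`. -/
noncomputable def cntG [Fintype G] (p : ℕ) (K U : Subgroup G) : ℤ :=
  ∑ h : G, ∑ P : Subgroup G,
    if (h ∈ K ∧ IsSyl p K P ∧ h ∈ normalizer (P : Set G)) ∧ U ≤ P then 1 else 0

theorem pgroup_normalizer_grows [Finite G] {p : ℕ} [Fact p.Prime] {U Q : Subgroup G}
    (hQ : IsPGroup p Q) (h : U < Q) : U < Q ⊓ normalizer (U : Set G) := by
  refine lt_of_le_of_ne (le_inf h.le le_normalizer) fun he => ?_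
  have hnil : Group.IsNilpotent Q := hQ.isNilpotent
  have hnc : NormalizerCondition Q := Group.normalizerCondition_of_isNilpotent
  rw [normalizerCondition_iff_only_full_group_self_normalizing] at hnc
  have := hnc (U.subgroupOf Q) (by
    rw [← subgroupOf_normalizer_eq h.le]
    conv_rhs => rw [he]
    rw [inf_subgroupOf_left])
  rw [subgroupOf_eq_top] at this
  exact h.not_ge this

theorem exists_isSyl_ge [Finite G] {p : ℕ} {K U : Subgroup G} (hU : IsPGroup p U) (h : U ≤ K) :
    ∃ P, U ≤ P ∧ IsSyl p K P :=
  Finite.exists_le_maximal (p := fun Q : Subgroup G => IsPGroup p Q ∧ Q ≤ K) ⟨hU, h⟩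

theorem isSyl_map {p : ℕ} {K : Subgroup G} (P : Sylow p K) :
    IsSyl p K ((P : Subgroup K).map K.subtype) := by
  refine ⟨⟨P.isPGroup'.map _, map_subtype_le _⟩, fun Q hQ hle => ?_⟩
  have : Q.subgroupOf K = P := P.is_maximal' (hQ.1.comap_subtype) (by
    exact map_le_iff_le_comap.1 hle)
  rw [← this, subgroupOf_map_subtype, inf_eq_left.2 hQ.2]

theorem sum_isSyl [Fintype G] {p : ℕ} [Fact p.Prime] (K : Subgroup G) :
    (∑ h : G, ∑ P : Subgroup G,
      if h ∈ K ∧ IsSyl p K P ∧ h ∈ normalizer (P : Set G) then (1 : ℤ) else 0) = Nat.card K := by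
  have hb := MulAction.sum_card_fixedBy_eq_card_orbits_mul_card_group K (Sylow p K)
  have : Fintype.card (MulAction.orbitRel.Quotient K (Sylow p K)) = 1 := by
    rw [Fintype.card_eq_one_iff_nonempty_unique]
    exact ⟨(MulAction.pretransitive_iff_unique_quotient_of_nonempty K (Sylow p K)).1 inferInstance |>.some⟩
  rw [this, one_mul, ← Nat.card_eq_fintype_card (α := K)] at hb
  rw [← hb]
  push_cast
  have hk : ∀ h : G, (∑ P : Subgroup G,
      if h ∈ K ∧ IsSyl p K P ∧ h ∈ normalizer (P : Set G) then (1 : ℤ) else 0) =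
      if hh : h ∈ K then (Fintype.card (MulAction.fixedBy (Sylow p K) (⟨h, hh⟩ : K)) : ℤ) else 0 := by
    intro h
    split_ifs with hh
    · simp only [hh, true_and]
      rw [Finset.sum_boole, Fintype.card_subtype]
      congr 1
      symm
      apply Finset.card_bij (fun (P : Sylow p K) _ => (P : Subgroup K).map K.subtype)
      · intro P hP
        simp only [Finset.mem_filter, Finset.mem_univ, true_and] at hP ⊢
        refine ⟨isSyl_map P, ?_⟩
        rw [MulAction.mem_fixedBy, Sylow.smul_eq_iff_mem_normalizer] at hP
        exact le_normalizer_map (H := (P : Subgroup K)) K.subtype (mem_map_of_mem K.subtype hP)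
      · intro P _ P' _ he
        exact Sylow.ext (map_injective K.subtype_injective he)
      · intro Q hQ
        simp only [Finset.mem_filter, Finset.mem_univ, true_and] at hQ
        have hm : (Q.subgroupOf K).map K.subtype = Q := by
          rw [subgroupOf_map_subtype, inf_eq_left.2 hQ.1.prop.2]
        refine ⟨⟨Q.subgroupOf K, hQ.1.prop.1.comap_subtype, ?_⟩, ?_, hm⟩
        · intro R hR hle
          have h1 := hQ.1.eq_of_le ⟨hR.map K.subtype, map_subtype_le R⟩ (by
            rw [← hm]; exact map_mono hle)
          apply map_injective K.subtype_injective
          rw [hm, ← h1]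
        · simp only [Finset.mem_filter, Finset.mem_univ, true_and]
          rw [MulAction.mem_fixedBy, Sylow.smul_eq_iff_mem_normalizer]
          exact le_normalizer_comap (H := Q) K.subtype hQ.2
    · simp [hh]
  rw [Finset.sum_congr rfl fun h _ => hk h]
  refine (Fintype.sum_of_injective (Subtype.val : K → G) Subtype.val_injective _ _ ?_ ?_).symm
  · intro h hh
    rw [dif_neg (by simpa using hh)]
  · intro h
    rw [dif_pos h.2]
  
theorem casolo [Fintype G] {p : ℕ} [Fact p.Prime] (U : Subgroup G) :
    ∀ K : Subgroup G, U ≤ K → cntF p K U = cntG p K U := by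
  induction U using WellFoundedGT.induction with
  | _ U ih =>
  intro K hUK
  by_cases hpU : IsPGroup p U
  swap
  · have h1 : ∀ Q : Subgroup G, IsPGroup p Q → ¬ U ≤ Q := fun Q hQ hle => hpU (hQ.to_le hle)
    have hF : cntF p K U = 0 := by
      refine Finset.sum_eq_zero fun h _ => if_neg ?_
      rintro ⟨-, Q, hQ, hle, -⟩
      exact h1 Q hQ hle
    have hG : cntG p K U = 0 := by
      refine Finset.sum_eq_zero fun h _ => Finset.sum_eq_zero fun P _ => if_neg ?_
      rintro ⟨⟨-, hP, -⟩, hle⟩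
      exact h1 P hP.prop.1 hle
    rw [hF, hG]
  by_cases hmax : IsSyl p K U
  · refine Finset.sum_congr rfl fun h _ => ?_
    rw [Finset.sum_eq_single U]
    · refine if_congr ⟨?_, ?_⟩ rfl rfl
      · rintro ⟨hK, Q, hQ, hle, hn⟩
        refine ⟨⟨hK, hmax, ?_⟩, le_rfl⟩
        have : U = Q ⊓ K := hmax.eq_of_le ⟨hQ.to_le inf_le_left, inf_le_right⟩ (le_inf hle hUK)
        rw [this]
        exact inf_normalizer_le_normalizer_inf ⟨hn, le_normalizer hK⟩
      · rintro ⟨⟨hK, -, hn⟩, -⟩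
        exact ⟨hK, U, hpU, le_rfl, hn⟩
    · intro P _ hPU
      refine if_neg ?_
      rintro ⟨⟨-, hP, -⟩, hle⟩
      exact hPU (hmax.eq_of_le hP.prop hle).symm
    · simp
  obtain ⟨c, hc⟩ := exists_moebius U
  set N : Subgroup G := K ⊓ normalizer (U : Set G) with hN
  have hUN : U ≤ N := le_inf hUK le_normalizer
  have hNK : N ≤ K := inf_le_left
  have hnU : N ≤ normalizer (U : Set G) := inf_le_right
  set R : Finset (Subgroup G) := Finset.univ.filter (fun R => U < R ∧ R ≤ N) with hR
  have hmR : ∀ X, X ∈ R ↔ U < X ∧ X ≤ N := fun X => by simp [hR]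
  -- relation for `SubN`
  have key1 : ∀ h ∈ K, h ∉ N →
      (if SubN p h U then (1 : ℤ) else 0) = ∑ X ∈ R, c X * (if SubN p h X then 1 else 0) := by
    intro h hK hhN
    have hhU : h ∉ normalizer (U : Set G) := fun hh => hhN ⟨hK, hh⟩
    by_cases hS : SubN p h U
    swap
    · rw [if_neg hS, Finset.sum_eq_zero]
      intro X hX
      rw [if_neg, mul_zero]
      rintro ⟨Q, hQ, hle, hn⟩
      exact hS ⟨Q, hQ, (((hmR X).1 hX).1.le).trans hle, hn⟩
    rw [if_pos hS]
    simp only [mul_ite, mul_one, mul_zero]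
    rw [← Finset.sum_filter]
    set V : Subgroup G := ⨅ Q : {Q : Subgroup G // U ≤ Q ∧ h ∈ normalizer (Q : Set G)}, Q.1 with hV
    have hUV : U ≤ V := le_iInf fun Q => Q.2.1
    have hVn : h ∈ normalizer (V : Set G) := by
      apply iInf_normalizer_le_normalizer_iInf
      rw [mem_iInf]
      exact fun Q => Q.2.2
    have hVle : ∀ Q : Subgroup G, U ≤ Q → h ∈ normalizer (Q : Set G) → V ≤ Q := fun Q h1 h2 =>
      iInf_le (fun Q : {Q : Subgroup G // U ≤ Q ∧ h ∈ normalizer (Q : Set G)} => Q.1) ⟨Q, h1, h2⟩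
    have hVp : IsPGroup p V := by
      obtain ⟨Q, hQ, hle, hn⟩ := hS
      exact hQ.to_le (hVle Q hle hn)
    have hVK : V ≤ K := hVle K hUK (le_normalizer hK)
    have hlt : U < V := lt_of_le_of_ne hUV (by
      intro he
      rw [← he] at hVn
      exact hhU hVn)
    have hR₀ := pgroup_normalizer_grows hVp hlt
    symm
    refine sum_moebius hc hR₀ _ _ rfl ?_ ?_ ?_ ?_
    · rw [Finset.mem_filter, hmR]
      exact ⟨⟨hR₀, le_inf (inf_le_left.trans hVK) inf_le_right⟩, V, hVp, inf_le_left, hVn⟩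
    · intro X hX
      rw [Finset.mem_filter, hmR] at hX
      exact hX.1.1
    · intro X hX X' h1 h2
      rw [Finset.mem_filter, hmR] at hX ⊢
      obtain ⟨⟨-, h3⟩, Q, hQ, hle, hn⟩ := hX
      exact ⟨⟨h1, h2.trans h3⟩, Q, hQ, h2.trans hle, hn⟩
    · intro X hX
      rw [Finset.mem_filter, hmR] at hX ⊢
      obtain ⟨⟨h0, h3⟩, Q, hQ, hle, hn⟩ := hX
      refine ⟨⟨lt_of_lt_of_le h0 le_sup_left,
        sup_le h3 (le_inf (inf_le_left.trans hVK) inf_le_right)⟩, Q, hQ, sup_le hle ?_, hn⟩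
      exact inf_le_left.trans (hVle Q (h0.le.trans hle) hn)
  -- relation for Sylow subgroups
  have key2 : ∀ L : Subgroup G, N ≤ L → L ≤ K → ∀ P, IsSyl p L P → U ≠ P →
      (if U ≤ P then (1 : ℤ) else 0) = ∑ X ∈ R, c X * (if X ≤ P then 1 else 0) := by
    intro L hNL hLK P hP hUP
    by_cases hle : U ≤ P
    swap
    · rw [if_neg hle, Finset.sum_eq_zero]
      intro X hX
      rw [if_neg, mul_zero]
      intro h1
      exact hle (((hmR X).1 hX).1.le.trans h1)
    rw [if_pos hle]
    simp only [mul_ite, mul_one, mul_zero]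
    rw [← Finset.sum_filter]
    have hR₀ := pgroup_normalizer_grows hP.prop.1 (lt_of_le_of_ne hle hUP)
    rw [← hc _ hR₀]
    refine Finset.sum_congr ?_ fun _ _ => rfl
    ext X
    simp only [Finset.mem_filter, hmR, Finset.mem_univ, true_and, le_inf_iff, hN]
    have := hP.prop.2
    constructor
    · rintro ⟨h1, h2, h3⟩
      exact ⟨⟨h1, h2.trans (this.trans hLK), h3⟩, h2⟩
    · rintro ⟨⟨h1, h2, h3⟩, h4⟩
      exact ⟨h1, h4, h3⟩
  have key3 : ∀ L : Subgroup G, N ≤ L → L ≤ K → ¬ IsSyl p L U →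
      cntG p L U = ∑ X ∈ R, c X * cntG p L X := by
    intro L hNL hLK hns
    unfold cntG
    simp only [Finset.mul_sum]
    rw [Finset.sum_comm (s := R)]
    refine Finset.sum_congr rfl fun h _ => ?_
    rw [Finset.sum_comm (s := R)]
    refine Finset.sum_congr rfl fun P _ => ?_
    by_cases hcond : h ∈ L ∧ IsSyl p L P ∧ h ∈ normalizer (P : Set G)
    · simp only [hcond, true_and, and_self]
      refine key2 L hNL hLK P hcond.2.1 ?_
      rintro rfl
      exact hns hcond.2.1
    · simp [hcond]
  have hnsN : ¬ IsSyl p N U := by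
    intro hs
    obtain ⟨P, hUP, hP⟩ := exists_isSyl_ge hpU hUK
    have hne : U ≠ P := by rintro rfl; exact hmax hP
    have hR₀ := pgroup_normalizer_grows hP.prop.1 (lt_of_le_of_ne hUP hne)
    exact hR₀.ne (hs.eq_of_le ⟨hP.prop.1.to_le inf_le_left,
      le_inf (inf_le_left.trans hP.prop.2) inf_le_right⟩ hR₀.le)
  have hGN : cntG p N U = Nat.card N := by
    rw [← sum_isSyl (p := p) N]
    refine Finset.sum_congr rfl fun h _ => Finset.sum_congr rfl fun P _ =>
      if_congr ⟨fun h => h.1, fun h => ⟨h, ?_⟩⟩ rfl rfl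
    have hP := h.2.1
    have h1 : IsPGroup p (P ⊔ U : Subgroup G) :=
      hP.prop.1.to_sup_of_normal_right' hpU (hP.prop.2.trans hnU)
    have := hP.eq_of_le ⟨h1, sup_le hP.prop.2 hUN⟩ le_sup_left
    rw [this]
    exact le_sup_right
  have hF : cntF p K U = Nat.card N + ∑ X ∈ R, c X * (cntF p K X - cntF p N X) := by
    have hcN : (Nat.card N : ℤ) = ∑ h : G, if h ∈ N then 1 else 0 := by
      rw [Finset.sum_boole, Nat.card_eq_fintype_card, Fintype.card_subtype]
    rw [hcN]
    unfold cntF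
    simp only [← Finset.sum_sub_distrib, Finset.mul_sum]
    rw [Finset.sum_comm, ← Finset.sum_add_distrib]
    refine Finset.sum_congr rfl fun h _ => ?_
    by_cases hK : h ∈ K
    swap
    · have : h ∉ N := fun hh => hK (hNK hh)
      simp [hK, this]
    by_cases hhN : h ∈ N
    · have : SubN p h U := ⟨U, hpU, le_rfl, hnU hhN⟩
      simp [hK, hhN, this]
    · have := key1 h hK hhN
      simp only [hK, hhN, true_and, false_and, if_false, sub_zero, zero_add]
      exact this
  rw [hF, key3 K hNK le_rfl hmax, ← hGN, key3 N le_rfl hNK hnsN, ← Finset.sum_add_distrib]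
  refine Finset.sum_congr rfl fun X hX => ?_
  rw [hmR] at hX
  rw [ih X hX.1 K (hX.2.trans hNK), ih X hX.1 N hX.2]
  ring

theorem isSyl_top_iff [Finite G] {p : ℕ} (P : Subgroup G) :
    IsSyl p ⊤ P ↔ ∃ S : Sylow p G, (S : Subgroup G) = P := by
  constructor
  · intro h
    exact ⟨⟨P, h.prop.1, fun hQ hle => (h.eq_of_le ⟨hQ, le_top⟩ hle).symm⟩, rfl⟩
  · rintro ⟨S, rfl⟩
    exact ⟨⟨S.isPGroup', le_top⟩, fun Q hQ hle => (S.is_maximal' hQ.1 hle).le⟩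

theorem count_tuples {p : ℕ} [Fact p.Prime] (H : Type*) [Group H] [Finite H] (ι : Type*)
    [Fintype ι] :
    Nat.card {x : H × (ι → H) // ∃ Q : Subgroup H, IsPGroup p Q ∧
      x.1 ∈ normalizer (Q : Set H) ∧ ∀ i, x.2 i ∈ Q} * Nat.card (Sylow p H) ^ Fintype.card ι ≤
    Nat.card H ^ (Fintype.card ι + 1) := by
  have := Fintype.ofFinite H
  let S : Sylow p H := default
  have hT : (Nat.card {x : H × (ι → H) // ∃ Q : Subgroup H, IsPGroup p Q ∧
      x.1 ∈ normalizer (Q : Set H) ∧ ∀ i, x.2 i ∈ Q} : ℤ) =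
      ∑ u : ι → H, cntF p ⊤ (closure (Set.range u)) := by
    rw [Nat.card_eq_fintype_card, Fintype.card_subtype, ← Finset.sum_boole,
      Fintype.sum_prod_type_right]
    refine Finset.sum_congr rfl fun u _ => Finset.sum_congr rfl fun h _ => if_congr ?_ rfl rfl
    simp only [mem_top, true_and, SubN, closure_le, Set.range_subset_iff, SetLike.mem_coe]
    exact exists_congr fun Q => by tauto
  have hT2 : (∑ u : ι → H, cntF p ⊤ (closure (Set.range u)) : ℤ) =
      (Nat.card S : ℤ) ^ Fintype.card ι * Nat.card H := by
    rw [Finset.sum_congr rfl fun u _ => casolo (p := p) _ ⊤ le_top]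
    unfold cntG
    have h0 := sum_isSyl (p := p) (⊤ : Subgroup H)
    rw [card_top] at h0
    rw [← h0, Finset.sum_comm, Finset.mul_sum]
    refine Finset.sum_congr rfl fun h _ => ?_
    rw [Finset.sum_comm, Finset.mul_sum]
    refine Finset.sum_congr rfl fun P _ => ?_
    by_cases hcond : h ∈ (⊤ : Subgroup H) ∧ IsSyl p ⊤ P ∧ h ∈ normalizer (P : Set H)
    · rw [if_pos hcond, mul_one]
      simp only [hcond, and_self, true_and]
      obtain ⟨S', hS'⟩ := (isSyl_top_iff P).1 hcond.2.1
      have hcard : Nat.card S = Nat.card P := by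
        rw [← hS']
        exact Nat.card_congr (S.equiv S').toEquiv
      rw [Finset.sum_boole, hcard, ← Fintype.card_subtype, ← Nat.card_eq_fintype_card]
      norm_cast
      rw [← Nat.card_eq_fintype_card (α := ι), ← Nat.card_fun]
      refine Nat.card_congr ?_
      refine (Equiv.subtypeEquivRight fun u => ?_).trans (Equiv.subtypePiEquivPi (p := fun _ : ι => fun x : H => x ∈ P))
      simp only [closure_le, Set.range_subset_iff, SetLike.mem_coe]
    · simp only [hcond, false_and, if_false, Finset.sum_const_zero, mul_zero]
  have hn : Nat.card S * Nat.card (Sylow p H) ≤ Nat.card H := by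
    rw [S.card_eq_index_normalizer, ← card_mul_index (normalizer (S : Set H))]
    refine Nat.mul_le_mul_right _ ?_
    exact card_le_of_le (H := (S : Subgroup H)) le_normalizer
  have hT3 := hT.trans hT2
  norm_cast at hT3
  rw [hT3, mul_right_comm, ← mul_pow, pow_succ]
  exact Nat.mul_le_mul_right _ (Nat.pow_le_pow_left hn _)

theorem exists_normal_p_of_subnormal [Finite G] {p : ℕ} [Fact p.Prime] {A B : Subgroup G}
    (hA : IsPGroup p A) (h : IsSubnormalIn A B) :
    ∃ M : Subgroup G, IsPGroup p M ∧ A ≤ M ∧ M ≤ B ∧ B ≤ normalizer (M : Set G) := by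
  induction h with
  | refl => exact ⟨A, hA, le_rfl, le_rfl, le_normalizer⟩
  | @tail B C _ hBC ih =>
    obtain ⟨hle, hnorm⟩ := hBC
    have hCB : C ≤ normalizer (B : Set G) := (normal_subgroupOf_iff_le_normalizer hle).1 hnorm
    obtain ⟨M₀, h0⟩ := ih
    obtain ⟨M, -, hM⟩ := Finite.exists_le_maximal (p := fun M : Subgroup G =>
      IsPGroup p M ∧ A ≤ M ∧ M ≤ B ∧ B ≤ normalizer (M : Set G)) h0
    obtain ⟨h1, h2, h3, h4⟩ := hM.prop
    refine ⟨M, h1, h2, h3.trans hle, ?_⟩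
    rw [le_normalizer_iff]
    intro g hg m hm
    have hgB := mem_normalizer_iff_map_conj_eq.1 (hCB hg)
    set M' := M.map (MulAut.conj g).toMonoidHom with hM'
    have h5 : M' ≤ B := by
      rw [← hgB]; exact map_mono h3
    have h6 : B ≤ normalizer (M' : Set G) := by
      rw [← hgB]
      exact (map_mono h4).trans (le_normalizer_map _)
    have h7 : IsPGroup p (M ⊔ M' : Subgroup G) :=
      h1.to_sup_of_normal_right' (h1.map _) (h3.trans h6)
    have h8 : B ≤ normalizer ((M ⊔ M' : Subgroup G) : Set G) := by
      intro b hb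
      rw [mem_normalizer_iff_map_conj_eq, Subgroup.map_sup, mem_normalizer_iff_map_conj_eq.1 (h4 hb),
        mem_normalizer_iff_map_conj_eq.1 (h6 hb)]
    have h9 := hM.le_of_ge ⟨h7, h2.trans le_sup_left, sup_le h3 h5, h8⟩ le_sup_left
    exact h9 (le_sup_right (a := M) (mem_map_of_mem _ hm))

end helpers

theorem tuple_of_mem {p : ℕ} [Fact p.Prime] {H : Type*} [Group H] [Finite H]
    (g : (ZMod p → H) ⋊[shiftHom p H] Multiplicative (ZMod p))
    (hg : g ∈ subnormalizerSet (SemidirectProduct.inr (Multiplicative.ofAdd (1 : ZMod p)) :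
        (ZMod p → H) ⋊[shiftHom p H] Multiplicative (ZMod p))) :
    ∃ Q : Subgroup H, IsPGroup p Q ∧ g.left 0 ∈ normalizer (Q : Set H) ∧
      ∀ i, (g.left 0)⁻¹ * g.left i ∈ Q := by
  have : Finite ((ZMod p → H) ⋊[shiftHom p H] Multiplicative (ZMod p)) :=
    Finite.of_equiv _ SemidirectProduct.equivProd.symm
  set x : (ZMod p → H) ⋊[shiftHom p H] Multiplicative (ZMod p) :=
    SemidirectProduct.inr (Multiplicative.ofAdd (1 : ZMod p)) with hx
  have hxc : ∀ c : ZMod p, (SemidirectProduct.inr (Multiplicative.ofAdd c) :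
      (ZMod p → H) ⋊[shiftHom p H] Multiplicative (ZMod p)) ∈ zpowers x := by
    intro c
    refine ⟨c.val, ?_⟩
    simp only [hx, zpow_natCast]
    rw [← map_pow, ← ofAdd_nsmul]
    simp
  have hxp : IsPGroup p (zpowers x) := by
    refine IsPGroup.of_card (n := 1) ?_
    rw [Nat.card_zpowers, pow_one, hx, orderOf_injective _ SemidirectProduct.inr_injective,
      orderOf_ofAdd_eq_addOrderOf, ZMod.addOrderOf_one]
  obtain ⟨M, hM, hxM, -, hn⟩ := exists_normal_p_of_subnormal hxp hg
  set y : (ZMod p → H) ⋊[shiftHom p H] Multiplicative (ZMod p) :=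
    SemidirectProduct.inl g.left with hy
  have hyn : y ∈ normalizer (M : Set _) := by
    apply hn
    have : y = g * (SemidirectProduct.inr g.right)⁻¹ := by
      rw [eq_mul_inv_iff_mul_eq, hy, SemidirectProduct.inl_left_mul_inr_right]
    rw [this]
    refine mul_mem ((le_sup_right : zpowers g ≤ _) (mem_zpowers g)) (inv_mem ?_)
    exact (le_sup_left : zpowers x ≤ _) (hxc g.right.toAdd)
  refine ⟨(M.comap SemidirectProduct.inl).map (Pi.evalMonoidHom (fun _ : ZMod p => H) 0),
    (hM.comap_of_injective _ SemidirectProduct.inl_injective).map _, ?_, ?_⟩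
  · exact le_normalizer_map _ (mem_map_of_mem (Pi.evalMonoidHom (fun _ : ZMod p => H) 0)
      (le_normalizer_comap (H := M) SemidirectProduct.inl (mem_comap.2 hyn)))
  · intro i
    refine ⟨g.left⁻¹ * shiftHom p H (Multiplicative.ofAdd i) g.left, ?_, ?_⟩
    · change SemidirectProduct.inl _ ∈ M
      rw [map_mul, SemidirectProduct.inl_aut, map_inv, ← hy]
      have h1 := hxM (hxc i)
      have h2 := (mem_normalizer_iff.1 (inv_mem hyn) _).1 h1
      rw [inv_inv] at h2
      have h3 := mul_mem h2 (inv_mem h1)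
      simpa [mul_assoc] using h3
    · simp [shiftHom, MulEquiv.arrowCongr]

/-- For `G = (H₁ × ⋯ × H_p) ⋊ ⟨x⟩`, where `x` has order `p` and cyclically permutes the
`p` copies of `H`, one has `spr_G(x) ≤ 1/n_p(H)^{p-1}`. -/
theorem stmt5 (p : ℕ) [Fact p.Prime] (H : Type*) [Group H] [Finite H] :
    spr (SemidirectProduct.inr (Multiplicative.ofAdd (1 : ZMod p)) :
        (ZMod p → H) ⋊[shiftHom p H] Multiplicative (ZMod p)) ≤
      1 / ((Nat.card (Sylow p H) : ℚ)) ^ (p - 1) := by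
  have hp : p.Prime := Fact.out
  set T := {x : H × ({i : ZMod p // i ≠ 0} → H) // ∃ Q : Subgroup H, IsPGroup p Q ∧
      x.1 ∈ normalizer (Q : Set H) ∧ ∀ i, x.2 i ∈ Q} with hT
  have hcount := count_tuples (p := p) H {i : ZMod p // i ≠ 0}
  have hcι : Fintype.card {i : ZMod p // i ≠ 0} = p - 1 := by
    rw [Fintype.card_subtype_compl, ZMod.card, Fintype.card_unique]
  rw [hcι, Nat.sub_add_cancel hp.one_le] at hcount
  have hle : Nat.card (subnormalizerSet (SemidirectProduct.inr (Multiplicative.ofAdd (1 : ZMod p)) :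
        (ZMod p → H) ⋊[shiftHom p H] Multiplicative (ZMod p))) ≤ p * Nat.card T := by
    have hz : p * Nat.card T = Nat.card (ZMod p × T) := by
      rw [Nat.card_prod, Nat.card_zmod]
    rw [hz]
    refine Nat.card_le_card_of_injective (fun g => (g.1.right.toAdd,
      ⟨(g.1.left 0, fun i => (g.1.left 0)⁻¹ * g.1.left i), ?_⟩)) ?_
    · obtain ⟨Q, h1, h2, h3⟩ := tuple_of_mem g.1 g.2
      exact ⟨Q, h1, h2, fun i => h3 i⟩
    · rintro ⟨g, hg⟩ ⟨g', hg'⟩ he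
      have e1 := congrArg Prod.fst he
      have e2 : g.left 0 = g'.left 0 := congrArg (fun z => z.2.1.1) he
      have e3 : (fun i : {i : ZMod p // i ≠ 0} => (g.left 0)⁻¹ * g.left i) =
        fun i : {i : ZMod p // i ≠ 0} => (g'.left 0)⁻¹ * g'.left i := congrArg (fun z => z.2.1.2) he
      ext1
      refine SemidirectProduct.ext ?_ e1
      funext i
      by_cases hi : i = 0
      · rw [hi, e2]
      · have := congrFun e3 ⟨i, hi⟩
        simpa [e2] using this
  have hcG : Nat.card ((ZMod p → H) ⋊[shiftHom p H] Multiplicative (ZMod p)) =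
      p * Nat.card H ^ p := by
    rw [SemidirectProduct.card, Nat.card_fun, Nat.card_zmod, mul_comm]
    congr 1
    exact Nat.card_zmod p
  have hpos : 0 < Nat.card H := Nat.card_pos
  have hspos : 0 < Nat.card (Sylow p H) := Nat.card_pos
  unfold spr
  rw [hcG, div_le_div_iff₀ (by exact_mod_cast Nat.mul_pos hp.pos (pow_pos hpos p))
    (by exact_mod_cast pow_pos hspos _)]
  norm_cast
  rw [one_mul]
  calc _ ≤ p * Nat.card T * Nat.card (Sylow p H) ^ (p - 1) := Nat.mul_le_mul_right _ hle
    _ = p * (Nat.card T * Nat.card (Sylow p H) ^ (p - 1)) := mul_assoc _ _ _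
    _ ≤ _ := Nat.mul_le_mul_left _ hcount
end

section
/- Let G be a finite group, p a prime dividing |G|, and P a Sylow p-subgroup of G. Let 𝔘_p(G) denote the set of p-elements of G. Then Σ_{x ∈ 𝔘_p(G)} |S_G(x)| = |P|·|G|, where S_G(x) is the subnormalizer of ⟨x⟩ in G. -/
open Subgroup

namespace CasoloCount

section Posets

open scoped Classical in
lemma exists_weight {α : Type*} [PartialOrder α] (X : Finset α) :
    ∃ w : α → ℤ, ∀ x ∈ X, ∑ y ∈ X.filter (fun y => x ≤ y), w y = 1 := by
  induction X using Finset.strongInduction with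
  | H X ih =>
    by_cases hX : X.Nonempty
    · obtain ⟨m, hm⟩ := X.exists_minimal hX
      obtain ⟨w, hw⟩ := ih (X.erase m) (Finset.erase_ssubset hm.1)
      refine ⟨Function.update w m (1 - ∑ y ∈ (X.erase m).filter (fun y => m ≤ y), w y), ?_⟩
      have key : ∀ x, ∑ y ∈ (X.erase m).filter (fun y => x ≤ y),
          Function.update w m (1 - ∑ y ∈ (X.erase m).filter (fun y => m ≤ y), w y) y
          = ∑ y ∈ (X.erase m).filter (fun y => x ≤ y), w y := by
        intro x
        apply Finset.sum_congr rfl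
        intro y hy
        have : y ≠ m := by
          rintro rfl
          simp at hy
        rw [Function.update_of_ne this]
      intro x hx
      rw [← Finset.insert_erase hm.1, Finset.filter_insert]
      by_cases hxm : x = m
      · subst hxm
        rw [if_pos le_rfl, Finset.sum_insert (by simp)]
        simp only [Finset.insert_erase hm.1]
        rw [key, Function.update_self]
        ring
      · have hle : ¬ x ≤ m := fun h => hxm (le_antisymm h (hm.2 hx h))
        rw [if_neg hle]
        simp only [Finset.insert_erase hm.1]
        rw [key]
        exact hw x (Finset.mem_erase.2 ⟨hxm, hx⟩)
    · refine ⟨0, fun x hx => (hX ⟨x, hx⟩).elim⟩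

open scoped Classical in
lemma weight_unique {α : Type*} [PartialOrder α] (X : Finset α) (w u : α → ℤ)
    (hw : ∀ x ∈ X, ∑ y ∈ X.filter (fun y => x ≤ y), w y = 1)
    (hu : ∀ x ∈ X, ∑ y ∈ X.filter (fun y => x ≤ y), u y = 1) :
    ∀ x ∈ X, w x = u x := by
  by_contra! hcon
  obtain ⟨x₀, hx₀, hne⟩ := hcon
  obtain ⟨m, hm⟩ := (X.filter (fun x => w x ≠ u x)).exists_maximal
    ⟨x₀, Finset.mem_filter.2 ⟨hx₀, hne⟩⟩
  have hmX := Finset.mem_filter.1 hm.1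
  have h0 : ∑ y ∈ X.filter (fun y => m ≤ y), (w y - u y) = 0 := by
    rw [Finset.sum_sub_distrib, hw m hmX.1, hu m hmX.1]
    ring
  rw [Finset.sum_eq_single m] at h0
  · exact hmX.2 (by linarith)
  · intro y hy hym
    rw [Finset.mem_filter] at hy
    by_contra hy0
    have hyf : y ∈ X.filter (fun x => w x ≠ u x) :=
      Finset.mem_filter.2 ⟨hy.1, fun h => hy0 (by rw [h]; ring)⟩
    exact hym (le_antisymm (hm.2 hyf hy.2) hy.2)
  · intro h
    exact (h (Finset.mem_filter.2 ⟨hmX.1, le_rfl⟩)).elim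

open scoped Classical in
lemma weight_retract {α : Type*} [PartialOrder α] (X Y : Finset α) (w u : α → ℤ)
    (hw : ∀ x ∈ X, ∑ y ∈ X.filter (fun y => x ≤ y), w y = 1)
    (hu : ∀ x ∈ Y, ∑ y ∈ Y.filter (fun y => x ≤ y), u y = 1)
    (r : α → α) (hYX : Y ⊆ X) (hr : ∀ x ∈ X, r x ∈ Y)
    (hrle : ∀ x ∈ X, ∀ y ∈ Y, y ≤ r x ↔ y ≤ x) :
    ∑ x ∈ X, w x = ∑ y ∈ Y, u y := by
  have hv : ∀ x ∈ Y, ∑ y ∈ Y.filter (fun y => x ≤ y),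
      (∑ z ∈ X.filter (fun z => r z = y), w z) = 1 := by
    intro x hx
    rw [← hw x (hYX hx)]
    rw [← Finset.sum_fiberwise_of_maps_to (s := X.filter (fun y => x ≤ y))
      (t := Y.filter (fun y => x ≤ y)) (g := r)]
    · apply Finset.sum_congr rfl
      intro y hy
      rw [Finset.mem_filter] at hy
      apply Finset.sum_congr _ (fun _ _ => rfl)
      ext z
      simp only [Finset.mem_filter]
      constructor
      · rintro ⟨hz, rfl⟩
        exact ⟨⟨hz, (hrle z hz x hx).1 hy.2⟩, rfl⟩
      · rintro ⟨⟨hz, _⟩, h⟩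
        exact ⟨hz, h⟩
    · intro z hz
      rw [Finset.mem_filter] at hz ⊢
      exact ⟨hr z hz.1, (hrle z hz.1 x hx).2 hz.2⟩
  rw [← Finset.sum_fiberwise_of_maps_to hr]
  exact Finset.sum_congr rfl (fun y hy => weight_unique Y _ u hv hu y hy)

end Posets

section Groups

variable {G : Type*} [Group G] [Fintype G] (p : ℕ)

/-- Maximal `p`-subgroups of `M`. -/
def IsMaxP (M R : Subgroup G) : Prop :=
  IsPGroup p R ∧ R ≤ M ∧ ∀ T : Subgroup G, IsPGroup p T → T ≤ M → R ≤ T → T = R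

open scoped Classical in
/-- The `p`-subgroups of `M` normalized by `g`. -/
noncomputable def fam (M : Subgroup G) (g : G) : Finset (Subgroup G) :=
  Finset.univ.filter (fun R => IsPGroup p R ∧ R ≤ M ∧ g ∈ normalizer (R : Set G))

lemma mem_fam {M : Subgroup G} {g : G} {R : Subgroup G} :
    R ∈ fam p M g ↔ IsPGroup p R ∧ R ≤ M ∧ g ∈ normalizer (R : Set G) := by
  simp [fam]

/-- The weight. -/
noncomputable def wt (M : Subgroup G) (g : G) : Subgroup G → ℤ :=
  Classical.choose (exists_weight (fam p M g))

open scoped Classical in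
lemma wt_spec (M : Subgroup G) (g : G) : ∀ x ∈ fam p M g,
    ∑ y ∈ (fam p M g).filter (fun y => x ≤ y), wt p M g y = 1 :=
  Classical.choose_spec (exists_weight (fam p M g))

open scoped Classical in
/-- The total weight of `R`. -/
noncomputable def totWt (M R : Subgroup G) : ℤ :=
  ∑ g ∈ Finset.univ.filter (fun g : G => g ∈ M ∧ g ∈ normalizer (R : Set G)), wt p M g R

lemma totWt_max {M R : Subgroup G} (h : IsMaxP p M R) :
    totWt p M R = Nat.card (M ⊓ normalizer (R : Set G) : Subgroup G) := by
  classical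
  have h1 : ∀ g ∈ Finset.univ.filter (fun g : G => g ∈ M ∧ g ∈ normalizer (R : Set G)),
      wt p M g R = 1 := by
    intro g hg
    simp only [Finset.mem_filter, Finset.mem_univ, true_and] at hg
    have hR : R ∈ fam p M g := (mem_fam p).2 ⟨h.1, h.2.1, hg.2⟩
    rw [← wt_spec p M g R hR, Finset.sum_eq_single R]
    · intro y hy hne
      rw [Finset.mem_filter, mem_fam] at hy
      exact (hne (h.2.2 y hy.1.1 hy.1.2.1 hy.2)).elim
    · intro h'
      exact (h' (Finset.mem_filter.2 ⟨hR, le_rfl⟩)).elim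
  rw [totWt, Finset.sum_congr rfl h1, Finset.sum_const, nsmul_eq_mul, mul_one,
    Nat.card_eq_fintype_card, Fintype.card_subtype]
  simp only [mem_inf]

variable [Fact p.Prime]

lemma lt_inf_normalizer {Q R : Subgroup G} (hR : IsPGroup p R) (h : Q < R) :
    Q < R ⊓ normalizer (Q : Set G) := by
  refine lt_of_le_of_ne (le_inf h.le le_normalizer) ?_
  intro heq
  haveI : Group.IsNilpotent R := hR.isNilpotent
  have hn := Group.normalizerCondition_of_isNilpotent (G := R)
  have hlt : Q.subgroupOf R < ⊤ := by
    rw [lt_top_iff_ne_top, Ne, subgroupOf_eq_top]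
    exact h.not_ge
  have := hn _ hlt
  rw [← subgroupOf_normalizer_eq h.le] at this
  apply this.not_ge
  intro x hx
  rw [mem_subgroupOf] at hx ⊢
  rw [heq]
  exact ⟨x.2, hx⟩

lemma sum_sylow (K : Type*) [Group K] [Fintype K] [Fintype (Sylow p K)] :
    ∑ P : Sylow p K, Nat.card (normalizer ((P : Subgroup K) : Set K)) = Nat.card K := by
  have h : ∀ P : Sylow p K, Nat.card (normalizer ((P : Subgroup K) : Set K))
      = Nat.card (normalizer (((default : Sylow p K) : Subgroup K) : Set K)) := by
    intro P
    have h1 := P.card_eq_index_normalizer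
    have h2 := (default : Sylow p K).card_eq_index_normalizer
    have e1 := (normalizer ((P : Subgroup K) : Set K)).card_mul_index
    have e2 := (normalizer (((default : Sylow p K) : Subgroup K) : Set K)).card_mul_index
    have hpos : 0 < Nat.card (Sylow p K) := Nat.card_pos
    erw [← h1] at e1
    erw [← h2] at e2
    exact Nat.eq_of_mul_eq_mul_right hpos (e1.trans e2.symm)
  rw [Finset.sum_congr rfl (fun P _ => h P), Finset.sum_const, smul_eq_mul, mul_comm,
    Finset.card_univ, ← Nat.card_eq_fintype_card]
  have h2 := (default : Sylow p K).card_eq_index_normalizer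
  have e2 := (normalizer (((default : Sylow p K) : Subgroup K) : Set K)).card_mul_index
  erw [← h2] at e2
  exact e2

lemma isMaxP_map (N : Subgroup G) (P : Sylow p N) : IsMaxP p N ((P : Subgroup N).map N.subtype) := by
  refine ⟨P.isPGroup'.map _, map_subtype_le _, ?_⟩
  intro T hT hTN hle
  have h1 : (P : Subgroup N) ≤ T.subgroupOf N := by
    rw [subgroupOf, ← map_le_iff_le_comap]
    exact hle
  have h2 := P.is_maximal' (hT.comap_of_injective N.subtype N.subtype_injective) h1
  change T.subgroupOf N = _ at h2
  rw [← h2, map_subgroupOf_eq_of_le hTN]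

open scoped Classical in
lemma sum_max (N : Subgroup G) :
    ∑ R ∈ Finset.univ.filter (fun R : Subgroup G => IsMaxP p N R),
      Nat.card (N ⊓ normalizer (R : Set G) : Subgroup G) = Nat.card N := by
  rw [← sum_sylow p N]
  symm
  refine Finset.sum_bij (fun P _ => (P : Subgroup N).map N.subtype) ?_ ?_ ?_ ?_
  · intro P _
    simpa using isMaxP_map p N P
  · intro P _ P' _ h
    exact Sylow.ext (map_injective N.subtype_injective h)
  · intro R hR
    simp only [Finset.mem_filter, Finset.mem_univ, true_and] at hR
    refine ⟨⟨R.subgroupOf N, hR.1.comap_of_injective N.subtype N.subtype_injective, ?_⟩,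
      Finset.mem_univ _, map_subgroupOf_eq_of_le hR.2.1⟩
    intro Q hQ hle
    have := hR.2.2 (Q.map N.subtype) (hQ.map _) (map_subtype_le _) (by
      rw [← map_subgroupOf_eq_of_le hR.2.1]
      exact Subgroup.map_mono hle)
    rw [← this]
    exact (comap_map_eq_self_of_injective N.subtype_injective Q).symm
  · intro P _
    have h := subgroupOf_normalizer_eq (map_subtype_le (P : Subgroup N))
    have h2 : ((P : Subgroup N).map N.subtype).subgroupOf N = P :=
      comap_map_eq_self_of_injective N.subtype_injective _
    rw [h2] at h
    rw [← h, ← card_map_of_injective N.subtype_injective, subgroupOf_map_subtype, inf_comm]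

lemma totWt_eq_zero (Q : Subgroup G) : ∀ M : Subgroup G, IsPGroup p Q → Q ≤ M → ¬ IsMaxP p M Q →
    totWt p M Q = 0 := by
  classical
  induction Q using WellFoundedGT.induction with
  | ind Q ih =>
  intro M hQ hQM hnm
  set N : Subgroup G := M ⊓ normalizer (Q : Set G) with hN
  have hQN : Q ≤ N := le_inf hQM le_normalizer
  -- local formula
  have hloc : ∀ g ∈ N, wt p M g Q =
      1 - ∑ R ∈ (fam p N g).filter (fun R => Q < R), wt p N g R := by
    intro g hg
    have hQf : Q ∈ fam p M g := (mem_fam p).2 ⟨hQ, hQM, hg.2⟩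
    have h1 := wt_spec p M g Q hQf
    have hins : (fam p M g).filter (fun y => Q ≤ y)
        = insert Q ((fam p M g).filter (fun y => Q < y)) := by
      ext y
      simp only [Finset.mem_filter, Finset.mem_insert]
      constructor
      · rintro ⟨hy, hle⟩
        rcases hle.eq_or_lt with h | h
        · exact Or.inl h.symm
        · exact Or.inr ⟨hy, h⟩
      · rintro (rfl | ⟨hy, h⟩)
        · exact ⟨hQf, le_rfl⟩
        · exact ⟨hy, h.le⟩
    rw [hins, Finset.sum_insert (by simp)] at h1
    have h2 : ∑ R ∈ (fam p M g).filter (fun R => Q < R), wt p M g R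
        = ∑ R ∈ (fam p N g).filter (fun R => Q < R), wt p N g R := by
      have up : ∀ (L : Subgroup G), ∀ x ∈ (fam p L g).filter (fun R => Q < R),
          ∑ y ∈ ((fam p L g).filter (fun R => Q < R)).filter (fun y => x ≤ y), wt p L g y = 1 := by
        intro L x hx
        rw [Finset.mem_filter] at hx
        rw [← wt_spec p L g x hx.1]
        apply Finset.sum_congr _ (fun _ _ => rfl)
        ext y
        simp only [Finset.mem_filter]
        exact ⟨fun h => ⟨h.1.1, h.2⟩, fun h => ⟨⟨h.1, hx.2.trans_le h.2⟩, h.2⟩⟩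
      refine weight_retract _ _ _ _ (up M) (up N) (fun R => R ⊓ normalizer (Q : Set G)) ?_ ?_ ?_
      · intro R hR
        rw [Finset.mem_filter, mem_fam] at hR ⊢
        exact ⟨⟨hR.1.1, hR.1.2.1.trans inf_le_left, hR.1.2.2⟩, hR.2⟩
      · intro R hR
        rw [Finset.mem_filter, mem_fam] at hR ⊢
        refine ⟨⟨hR.1.1.to_le inf_le_left, inf_le_inf_right _ hR.1.2.1, ?_⟩,
          lt_inf_normalizer p hR.1.1 hR.2⟩
        exact inf_normalizer_le_normalizer_inf ⟨hR.1.2.2, le_normalizer hg.2⟩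
      · intro R hR T hT
        rw [Finset.mem_filter, mem_fam] at hT
        exact ⟨fun h => h.trans inf_le_left,
          fun h => le_inf h (hT.1.2.1.trans inf_le_right)⟩
    rw [← h2]
    linarith
  have hcardN : ((Finset.univ.filter (fun g : G => g ∈ N)).card : ℤ) = Nat.card N := by
    rw [Nat.card_eq_fintype_card, Fintype.card_subtype]
  have hstep : totWt p M Q = Nat.card N -
      ∑ R ∈ Finset.univ.filter (fun R : Subgroup G => IsPGroup p R ∧ R ≤ N ∧ Q < R),
        totWt p N R := by
    have e1 : totWt p M Q = ∑ g ∈ Finset.univ.filter (fun g : G => g ∈ N),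
        (1 - ∑ R ∈ (fam p N g).filter (fun R => Q < R), wt p N g R) := by
      rw [totWt]
      have hset : Finset.univ.filter (fun g : G => g ∈ M ∧ g ∈ normalizer (Q : Set G)) =
          Finset.univ.filter (fun g : G => g ∈ N) := by
        ext g
        simp only [Finset.mem_filter, hN, mem_inf]
      rw [hset]
      exact Finset.sum_congr rfl (fun g hg => hloc g (Finset.mem_filter.1 hg).2)
    rw [e1, Finset.sum_sub_distrib, Finset.sum_const, nsmul_eq_mul, mul_one, hcardN]
    congr 1
    simp only [totWt]
    apply Finset.sum_comm'
    intro g R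
    simp only [Finset.mem_filter, Finset.mem_univ, true_and, mem_fam]
    tauto
  have hmaxQ : ∀ R, IsMaxP p N R → Q < R := by
    intro R hR
    have hle : Q ≤ R := by
      have hs := hR.2.2 (R ⊔ Q) (hR.1.to_sup_of_normal_right' hQ (hR.2.1.trans inf_le_right))
        (sup_le hR.2.1 hQN) le_sup_left
      rw [← hs]
      exact le_sup_right
    refine lt_of_le_of_ne hle ?_
    rintro rfl
    apply hnm
    refine ⟨hQ, hQM, ?_⟩
    intro T hT hTM hle
    by_contra hne
    have hlt : Q < T := lt_of_le_of_ne hle (Ne.symm hne)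
    have h3 := lt_inf_normalizer p hT hlt
    exact h3.ne' (hR.2.2 _ (hT.to_le inf_le_left) (inf_le_inf_right _ hTM) h3.le)
  have hsum : ∑ R ∈ Finset.univ.filter (fun R : Subgroup G => IsPGroup p R ∧ R ≤ N ∧ Q < R),
        totWt p N R = Nat.card N := by
    rw [← sum_max p N]
    push_cast
    rw [← Finset.sum_subset (s₁ := Finset.univ.filter (fun R : Subgroup G => IsMaxP p N R))]
    · refine Finset.sum_congr rfl (fun R hR => ?_)
      simp only [Finset.mem_filter, Finset.mem_univ, true_and] at hR
      exact totWt_max p hR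
    · intro R hR
      simp only [Finset.mem_filter, Finset.mem_univ, true_and] at hR ⊢
      exact ⟨hR.1, hR.2.1, hmaxQ R hR⟩
    · intro R hR hR'
      simp only [Finset.mem_filter, Finset.mem_univ, true_and] at hR hR'
      exact ih R hR.2.2 N hR.1 hR.2.1 hR'
  rw [hstep, hsum, sub_self]

lemma mem_normalizer_of_le {H : Subgroup G} {g : G} (h : ∀ n ∈ H, g * n * g⁻¹ ∈ H) :
    g ∈ normalizer (H : Set G) := by
  exact mem_normalizer_fintype h

lemma exists_normal_of_subnormal {H K : Subgroup G} (hH : IsPGroup p H) (h : IsSubnormalIn H K) :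
    ∃ R : Subgroup G, IsPGroup p R ∧ H ≤ R ∧ R ≤ K ∧ K ≤ normalizer (R : Set G) := by
  induction h with
  | refl => exact ⟨H, hH, le_rfl, le_rfl, le_normalizer⟩
  | @tail K L hHK hKL ih =>
    obtain ⟨R₀, hR₀⟩ := ih
    obtain ⟨R, hR₀R, hR⟩ := (Set.toFinite {R : Subgroup G | IsPGroup p R ∧ H ≤ R ∧ R ≤ K ∧
      K ≤ normalizer (R : Set G)}).exists_le_maximal hR₀
    obtain ⟨⟨hp, hHR, hRK, hKR⟩, hmax⟩ := hR
    have hLK : L ≤ normalizer (K : Set G) :=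
      (normal_subgroupOf_iff_le_normalizer hKL.1).1 hKL.2
    refine ⟨R, hp, hHR, hRK.trans hKL.1, ?_⟩
    intro g hg
    set T := R.map (MulAut.conj g).toMonoidHom with hT
    have hTK : T ≤ K := by
      rintro _ ⟨r, hr, rfl⟩
      exact ((mem_normalizer_iff.1 (hLK hg)) r).1 (hRK hr)
    have hTp : IsPGroup p T := hp.map _
    have hKT : K ≤ normalizer (T : Set G) := by
      intro k hk
      apply mem_normalizer_of_le
      rintro _ ⟨r, hr, rfl⟩
      have hk' : g⁻¹ * k * g ∈ K := (mem_normalizer_iff''.1 (hLK hg) k).1 hk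
      refine ⟨(g⁻¹ * k * g) * r * (g⁻¹ * k * g)⁻¹, (mem_normalizer_iff.1 (hKR hk') r).1 hr, ?_⟩
      simp [mul_assoc]
    have hsup : R ⊔ T ≤ R := by
      apply hmax _ le_sup_left
      refine ⟨hp.to_sup_of_normal_right' hTp (hRK.trans hKT), hHR.trans le_sup_left,
        sup_le hRK hTK, ?_⟩
      exact (le_inf hKR hKT).trans (normalizer_inf_normalizer_le_normalizer_sup R T)
    apply mem_normalizer_of_le
    intro n hn
    exact hsup (le_sup_right (a := R) ⟨n, hn, rfl⟩)

lemma subnormal_of_pgroup {R : Subgroup G} (hR : IsPGroup p R) (H : Subgroup G) :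
    H ≤ R → IsSubnormalIn H R := by
  induction H using WellFoundedGT.induction with
  | ind H ih =>
  intro hle
  rcases hle.eq_or_lt with rfl | hlt
  · exact Relation.ReflTransGen.refl
  · have h := lt_inf_normalizer p hR hlt
    refine Relation.ReflTransGen.head ⟨h.le, ?_⟩ (ih _ h inf_le_left)
    exact (normal_subgroupOf_iff_le_normalizer h.le).2 inf_le_right

lemma mem_subnormalizer_iff {x g : G} (hx : IsPElement p x) :
    g ∈ subnormalizerSet x ↔
      ∃ R : Subgroup G, R ∈ fam p ⊤ g ∧ x ∈ R := by
  have hxp : IsPGroup p (zpowers x) := by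
    obtain ⟨k, hk⟩ := hx
    exact IsPGroup.of_card (n := k) (by rw [Nat.card_zpowers, hk])
  constructor
  · intro h
    obtain ⟨R, hp, hle, -, hn⟩ := exists_normal_of_subnormal p hxp h
    exact ⟨R, (mem_fam p).2 ⟨hp, le_top, hn (le_sup_right (a := zpowers x) (mem_zpowers g))⟩,
      hle (mem_zpowers x)⟩
  · rintro ⟨R, hR, hxR⟩
    rw [mem_fam] at hR
    set K := zpowers x ⊔ zpowers g with hK
    have hxle : zpowers x ≤ R ⊓ K := le_inf (by simpa using hxR) le_sup_left
    have h1 := subnormal_of_pgroup p (hR.1.to_le (inf_le_left (b := K))) _ hxle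
    refine Relation.ReflTransGen.tail h1 ⟨inf_le_right, ?_⟩
    rw [normal_subgroupOf_iff_le_normalizer inf_le_right]
    have hKR : K ≤ normalizer (R : Set G) :=
      sup_le (by simpa using le_normalizer hxR) (by simpa using hR.2.2)
    exact (le_inf hKR le_normalizer).trans inf_normalizer_le_normalizer_inf

open scoped Classical in
lemma card_subnormalizer {x : G} (hx : IsPElement p x) :
    (Nat.card (subnormalizerSet x) : ℤ) =
      ∑ g : G, ∑ R ∈ (fam p ⊤ g).filter (fun R => x ∈ R), wt p ⊤ g R := by
  have h1 : (Nat.card (subnormalizerSet x) : ℤ) =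
      ∑ g : G, if g ∈ subnormalizerSet x then 1 else 0 := by
    rw [Finset.sum_boole, Nat.card_eq_fintype_card, Fintype.card_subtype]
  rw [h1]
  refine Finset.sum_congr rfl (fun g _ => ?_)
  split_ifs with hg
  · rw [mem_subnormalizer_iff p hx] at hg
    obtain ⟨R₀, hR₀, hxR₀⟩ := hg
    set L : Subgroup G := sInf {R | R ∈ fam p ⊤ g ∧ x ∈ R} with hL
    have hLf : L ∈ fam p ⊤ g := by
      rw [mem_fam]
      refine ⟨((mem_fam p).1 hR₀).1.to_le (sInf_le ⟨hR₀, hxR₀⟩), le_top, ?_⟩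
      apply mem_normalizer_of_le
      intro n hn
      rw [hL, mem_sInf] at hn ⊢
      intro R hR
      exact (mem_normalizer_iff.1 ((mem_fam p).1 hR.1).2.2 n).1 (hn R hR)
    have hxL : x ∈ L := by
      rw [hL, mem_sInf]
      exact fun R hR => hR.2
    rw [← wt_spec p ⊤ g L hLf]
    apply Finset.sum_congr _ (fun _ _ => rfl)
    ext R
    simp only [Finset.mem_filter]
    exact ⟨fun h => ⟨h.1, h.2 hxL⟩, fun h => ⟨h.1, sInf_le h⟩⟩
  · rw [mem_subnormalizer_iff p hx] at hg
    symm
    apply Finset.sum_eq_zero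
    intro R hR
    rw [Finset.mem_filter] at hR
    exact (hg ⟨R, hR⟩).elim

lemma isPElement_of_mem {R : Subgroup G} (hR : IsPGroup p R) {x : G} (hx : x ∈ R) :
    IsPElement p x := by
  obtain ⟨k, hk⟩ := (IsPGroup.iff_orderOf.1 hR) ⟨x, hx⟩
  exact ⟨k, by rw [← hk, orderOf_mk]⟩

end Groups

end CasoloCount

open scoped Classical in
/-- The sum of `|S_G(x)|` over all `p`-elements `x` of `G` equals `|P|·|G|`. -/
theorem stmt9 {G : Type*} [Group G] [Fintype G] (p : ℕ) [Fact p.Prime]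
    (hpdvd : p ∣ Nat.card G) (P : Sylow p G) :
    ∑ x ∈ Finset.univ.filter (fun x : G => IsPElement p x),
        Nat.card (subnormalizerSet x) =
      Nat.card (P : Subgroup G) * Nat.card G := by
  suffices h : ((∑ x ∈ Finset.univ.filter (fun x : G => IsPElement p x),
        Nat.card (subnormalizerSet x) : ℕ) : ℤ) =
      ((Nat.card (P : Subgroup G) * Nat.card G : ℕ) : ℤ) by exact_mod_cast h
  push_cast
  have e1 : ∑ x ∈ Finset.univ.filter (fun x : G => IsPElement p x),
      (Nat.card (subnormalizerSet x) : ℤ) =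
      ∑ x ∈ Finset.univ.filter (fun x : G => IsPElement p x),
        ∑ R ∈ Finset.univ.filter (fun R : Subgroup G => IsPGroup p R ∧ x ∈ R),
          CasoloCount.totWt p ⊤ R := by
    refine Finset.sum_congr rfl (fun x hx => ?_)
    rw [CasoloCount.card_subnormalizer p (Finset.mem_filter.1 hx).2]
    simp only [CasoloCount.totWt]
    apply Finset.sum_comm'
    intro g R
    simp only [Finset.mem_filter, Finset.mem_univ, true_and, CasoloCount.mem_fam, le_top, mem_top]
    tauto
  have e2 : ∑ x ∈ Finset.univ.filter (fun x : G => IsPElement p x),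
        ∑ R ∈ Finset.univ.filter (fun R : Subgroup G => IsPGroup p R ∧ x ∈ R),
          CasoloCount.totWt p ⊤ R =
      ∑ R ∈ Finset.univ.filter (fun R : Subgroup G => IsPGroup p R),
        ∑ x ∈ Finset.univ.filter (fun x : G => x ∈ R), CasoloCount.totWt p ⊤ R := by
    apply Finset.sum_comm'
    intro x R
    simp only [Finset.mem_filter, Finset.mem_univ, true_and]
    constructor
    · rintro ⟨_, h⟩
      exact ⟨h.2, h.1⟩
    · rintro ⟨h1, h2⟩
      exact ⟨CasoloCount.isPElement_of_mem p h2 h1, h2, h1⟩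
  have e3 : ∑ R ∈ Finset.univ.filter (fun R : Subgroup G => IsPGroup p R),
        ∑ x ∈ Finset.univ.filter (fun x : G => x ∈ R), CasoloCount.totWt p ⊤ R =
      ∑ R ∈ Finset.univ.filter (fun R : Subgroup G => CasoloCount.IsMaxP p ⊤ R),
        (Nat.card (P : Subgroup G) : ℤ) *
          (Nat.card (⊤ ⊓ normalizer (R : Set G) : Subgroup G) : ℤ) := by
    rw [← Finset.sum_subset
      (s₁ := Finset.univ.filter (fun R : Subgroup G => CasoloCount.IsMaxP p ⊤ R))]
    · refine Finset.sum_congr rfl (fun R hR => ?_)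
      have hR' := (Finset.mem_filter.1 hR).2
      rw [Finset.sum_const, nsmul_eq_mul, CasoloCount.totWt_max p hR']
      have hc : (Finset.univ.filter (fun x : G => x ∈ R)).card = Nat.card (P : Subgroup G) := by
        have h1 : (Finset.univ.filter (fun x : G => x ∈ R)).card = Nat.card R := by
          rw [Nat.card_eq_fintype_card, Fintype.card_subtype]
        rw [h1]
        let S : Sylow p G := ⟨R, hR'.1, fun {Q} hQ hle => hR'.2.2 Q hQ le_top hle⟩
        exact Nat.card_congr (S.equiv P).toEquiv
      rw [hc]
    · intro R hR
      rw [Finset.mem_filter] at hR ⊢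
      exact ⟨hR.1, hR.2.1⟩
    · intro R hR hR'
      simp only [Finset.mem_filter, Finset.mem_univ, true_and] at hR hR'
      rw [CasoloCount.totWt_eq_zero p R ⊤ hR le_top hR', Finset.sum_const_zero]
  rw [e1, e2, e3, ← Finset.mul_sum]
  congr 1
  have h := CasoloCount.sum_max p (⊤ : Subgroup G)
  rw [card_top] at h
  exact_mod_cast h
end

section
/- Let L be a nonabelian finite simple group. Then the maximum over x ∈ Aut(L) of |C_L(x)| is at most |L|/6 unless L ≅ A_5, and for L = A_5 the maximum equals |L|/10 = 6. -/
open Equiv Equiv.Perm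

set_option maxRecDepth 100000

theorem dec1 : ∀ t : Perm (Fin 5), t * t = 1 → t ≠ 1 →
    (finRotate 5 * t) * (finRotate 5 * t) * (finRotate 5 * t) = 1 →
    ∃ i : Fin 5, t = (finRotate 5)^(i:ℕ) * (swap 0 1 * swap 2 3) * ((finRotate 5)^(i:ℕ))⁻¹ := by
  decide +kernel

theorem dec2 : (Finset.univ.filter (fun a : Perm (Fin 5) =>
    sign a = 1 ∧ swap 0 1 * a = a * swap 0 1)).card = 6 := by decide +kernel

theorem dec3 : ∀ s : Perm (Fin 5), s ≠ 1 → (Finset.univ.filter (fun a : Perm (Fin 5) =>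
    sign a = 1 ∧ s * a = a * s)).card ≤ 6 := by decide +kernel

theorem toPerm_inj {G : Type*} [Group G] [IsSimpleGroup G] (H : Subgroup G) (hH : H ≠ ⊤) :
    Function.Injective (MulAction.toPermHom G (G ⧸ H)) := by
  rw [← MonoidHom.ker_eq_bot_iff, ← Subgroup.normalCore_eq_ker]
  rcases (Subgroup.normalCore_normal H).eq_bot_or_eq_top with h | h
  · exact h
  · exact absurd (top_le_iff.mp (h ▸ Subgroup.normalCore_le H)) hH

theorem card_dvd_fact {G : Type*} [Group G] [Finite G] [IsSimpleGroup G] (H : Subgroup G)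
    (hH : H ≠ ⊤) : Nat.card G ∣ H.index.factorial := by
  have := Subgroup.card_dvd_of_injective _ (toPerm_inj H hH)
  rwa [Nat.card_perm, ← Subgroup.index_eq_card] at this

theorem no_sylow {G : Type*} [Group G] [Finite G] [IsSimpleGroup G] (p k m : ℕ) (hp : p.Prime)
    (hm : 1 < m) (h : Nat.card G = p ^ k * m) : p ^ k * m ∣ m.factorial := by
  haveI := Fact.mk hp
  obtain ⟨K, hK⟩ := Sylow.exists_subgroup_card_pow_prime (G := G) p (n := k) (h ▸ dvd_mul_right _ _)
  have hi : K.index = m := by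
    have := K.card_mul_index
    rw [hK, h] at this
    exact Nat.eq_of_mul_eq_mul_left (pow_pos hp.pos k) this
  have := card_dvd_fact K (by rintro rfl; simp at hi; omega)
  rwa [hi, h] at this

theorem cardA5 : Nat.card (alternatingGroup (Fin 5)) = 60 := by
  rw [nat_card_alternatingGroup]; simp [Nat.factorial]

instance : IsSimpleGroup (alternatingGroup (Fin 5)) :=
  alternatingGroup.isSimpleGroup (by simp)

theorem index_ge {K : Subgroup (alternatingGroup (Fin 5))} (hK : K ≠ ⊤) : 5 ≤ K.index := by
  by_contra! h
  have h1 := card_dvd_fact K hK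
  rw [cardA5] at h1
  have := Nat.le_of_dvd (Nat.factorial_pos _) h1
  have := Nat.factorial_le (show K.index ≤ 4 by omega)
  simp [Nat.factorial] at this
  omega

theorem iso_of_inj {L : Type*} [Group L] [Finite L] [IsSimpleGroup L]
    (hna : ∃ a b : L, a * b ≠ b * a) (f : L →* Perm (Fin 5)) (hf : Function.Injective f) :
    Nonempty (L ≃* alternatingGroup (Fin 5)) := by
  have hs : ∀ a, f a ∈ alternatingGroup (Fin 5) := by
    rcases (inferInstance : (sign.comp f).ker.Normal).eq_bot_or_eq_top with h | h
    · exfalso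
      rw [MonoidHom.ker_eq_bot_iff] at h
      obtain ⟨a, b, hab⟩ := hna
      exact hab (h (by simp [mul_comm]))
    · intro a
      have : a ∈ (sign.comp f).ker := h ▸ Subgroup.mem_top a
      simpa [MonoidHom.mem_ker, mem_alternatingGroup] using this
  let g : L →* alternatingGroup (Fin 5) := f.codRestrict _ hs
  have hg : Function.Injective g := fun a b h => hf (congrArg Subtype.val h)
  have hc : Nat.card g.range = Nat.card L := Nat.card_congr (MonoidHom.ofInjective hg).symm.toEquiv
  by_cases hr : g.range = ⊤
  · exact ⟨MulEquiv.ofBijective g ⟨hg, MonoidHom.range_eq_top.mp hr⟩⟩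
  exfalso
  have h5 := index_ge hr
  have hm := g.range.card_mul_index
  rw [hc, cardA5] at hm
  have h1 : 1 < Nat.card L := Finite.one_lt_card
  have hn : Nat.card L ≤ 12 := by nlinarith
  have hprime : ∀ p, p.Prime → Nat.card L ≠ p := by
    intro p hp h
    haveI := Fact.mk hp
    haveI := isCyclic_of_prime_card h
    obtain ⟨a, b, hab⟩ := hna
    letI := IsCyclic.commGroup (α := L)
    exact hab (IsMulCommutative.is_comm.comm a b)
  have hd : Nat.card L ∣ 60 := ⟨_, hm.symm⟩
  generalize hN : Nat.card L = n at *
  have : n = 2 ∨ n = 3 ∨ n = 4 ∨ n = 5 ∨ n = 6 ∨ n = 10 ∨ n = 12 := by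
    clear hm hprime hN
    interval_cases n <;> revert hd <;> decide
  rcases this with rfl | rfl | rfl | rfl | rfl | rfl | rfl
  · exact hprime 2 (by norm_num) rfl
  · exact hprime 3 (by norm_num) rfl
  · have := no_sylow (G := L) 2 1 2 (by norm_num) (by norm_num) (by omega)
    revert this; decide
  · exact hprime 5 (by norm_num) rfl
  · have := no_sylow (G := L) 3 1 2 (by norm_num) (by norm_num) (by omega)
    revert this; decide
  · have := no_sylow (G := L) 5 1 2 (by norm_num) (by norm_num) (by omega)
    revert this; decide
  · have := no_sylow (G := L) 2 2 3 (by norm_num) (by norm_num) (by omega)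
    revert this; decide

theorem part1 {L : Type*} [Group L] [Finite L] [IsSimpleGroup L]
    (hna : ∃ a b : L, a * b ≠ b * a) (hL : ¬ Nonempty (L ≃* alternatingGroup (Fin 5)))
    (x : MulAut L) (hx : x ≠ 1) : 6 * Nat.card {a : L | x a = a} ≤ Nat.card L := by
  let H : Subgroup L := x.toMonoidHom.eqLocus (MonoidHom.id L)
  have hH : H ≠ ⊤ := by
    intro h
    apply hx
    ext a
    have : a ∈ H := h ▸ Subgroup.mem_top a
    exact this
  have hcard : Nat.card {a : L | x a = a} = Nat.card H := rfl
  rw [hcard, ← H.card_mul_index, mul_comm]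
  apply Nat.mul_le_mul_left
  by_contra! h
  apply hL
  have hle : Nat.card (L ⧸ H) ≤ 5 := by rw [← Subgroup.index_eq_card]; omega
  let e : (L ⧸ H) ↪ Fin 5 := (Finite.equivFin (L ⧸ H)).toEmbedding.trans (Fin.castLEEmb hle)
  exact iso_of_inj hna ((viaEmbeddingHom e).comp (MulAction.toPermHom L (L ⧸ H)))
    ((viaEmbeddingHom_injective e).comp (toPerm_inj H hH))

theorem card_fix (s : Perm (Fin 5)) :
    Nat.card {a : alternatingGroup (Fin 5) | s * a.1 = a.1 * s} =
    (Finset.univ.filter (fun a : Perm (Fin 5) => sign a = 1 ∧ s * a = a * s)).card := by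
  have h2 : Nat.card {a : Perm (Fin 5) // sign a = 1 ∧ s * a = a * s} =
      (Finset.univ.filter (fun a : Perm (Fin 5) => sign a = 1 ∧ s * a = a * s)).card := by
    rw [Nat.card_eq_fintype_card, Fintype.card_subtype]
  rw [← h2]
  exact Nat.card_congr
    { toFun := fun a => ⟨a.1.1, mem_alternatingGroup.mp a.1.2, a.2⟩
      invFun := fun a => ⟨⟨a.1, mem_alternatingGroup.mpr a.2.1⟩, a.2.2⟩
      left_inv := fun _ => rfl
      right_inv := fun _ => rfl }

/-- A 5-cycle in `A₅`. -/
def uu : alternatingGroup (Fin 5) := ⟨finRotate 5, mem_alternatingGroup.mpr (by decide +kernel)⟩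

/-- A double transposition in `A₅`. -/
def tt : alternatingGroup (Fin 5) := ⟨swap 0 1 * swap 2 3, mem_alternatingGroup.mpr (by decide +kernel)⟩

theorem tt_mul : tt * tt = 1 := by decide +kernel
theorem tt_ne : tt ≠ 1 := by decide +kernel
theorem uu_pow : uu ^ 5 = 1 := by decide +kernel
theorem uu_ne : uu ≠ 1 := by decide +kernel
theorem ut_pow : (uu * tt) * (uu * tt) * (uu * tt) = 1 := by decide +kernel
theorem ut_ne : uu * tt ≠ 1 := by decide +kernel

theorem gen {K : Subgroup (alternatingGroup (Fin 5))} (hu : uu ∈ K) (ht : tt ∈ K) : K = ⊤ := by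
  by_contra hK
  have h5 := index_ge hK
  have hm := K.card_mul_index
  rw [cardA5] at hm
  have o5 : orderOf uu = 5 := haveI := Fact.mk Nat.prime_five; orderOf_eq_prime uu_pow uu_ne
  have o2 : orderOf tt = 2 := orderOf_eq_prime (by rw [pow_two, tt_mul]) tt_ne
  have o3 : orderOf (uu * tt) = 3 := orderOf_eq_prime (by rw [pow_three', ut_pow]) ut_ne
  have d5 : 5 ∣ Nat.card K := by
    have := Subgroup.orderOf_dvd_natCard K hu
    rwa [o5] at this
  have d2 : 2 ∣ Nat.card K := o2 ▸ Subgroup.orderOf_dvd_natCard K ht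
  have d3 : 3 ∣ Nat.card K := o3 ▸ Subgroup.orderOf_dvd_natCard K (K.mul_mem hu ht)
  have hpos : 0 < Nat.card K := Nat.card_pos
  have : 30 ≤ Nat.card K := by omega
  nlinarith

theorem conj5 (v : Perm (Fin 5)) (h5 : v ^ 5 = 1) (h1 : v ≠ 1) :
    ∃ c : Perm (Fin 5), v = c * finRotate 5 * c⁻¹ := by
  have key : ∀ w : Perm (Fin 5), w ^ 5 = 1 → w ≠ 1 → w.cycleType = {5} := by
    intro w h5 h1
    haveI := Fact.mk Nat.prime_five
    have ho : orderOf w = 5 := orderOf_eq_prime h5 h1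
    obtain ⟨n, hn⟩ := cycleType_prime_order (σ := w) (by rw [ho]; exact Nat.prime_five)
    have hs := w.sum_cycleType
    have hc := Finset.card_le_univ w.support
    rw [hn, ho] at hs
    simp at hs hc
    have : n = 0 := by omega
    rw [hn, ho, this]; rfl
  have : IsConj (finRotate 5) v := by
    rw [isConj_iff_cycleType_eq, key v h5 h1,
      key (finRotate 5) (congrArg Subtype.val uu_pow) (fun h => uu_ne (Subtype.ext h))]
  obtain ⟨c, hc⟩ := isConj_iff.mp this
  exact ⟨c, hc.symm⟩

theorem aut_conj (x : MulAut (alternatingGroup (Fin 5))) :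
    ∃ s : Perm (Fin 5), ∀ a, (x a).1 = s * a.1 * s⁻¹ := by
  obtain ⟨c, hc⟩ := conj5 (x uu).1
    (by have := congrArg (fun a => (x a).1) uu_pow; simpa using this)
    (fun h => uu_ne (x.injective (by rw [map_one]; exact Subtype.ext h)))
  have ht1 := congrArg (fun a => (x a).1) tt_mul
  have hut := congrArg (fun a => (x a).1) ut_pow
  simp only [map_mul, map_one, Subgroup.coe_mul, Subgroup.coe_one] at ht1 hut
  have htn : (x tt).1 ≠ 1 :=
    fun h => tt_ne (x.injective (by rw [map_one]; exact Subtype.ext h))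
  generalize hT : (x tt).1 = T at *
  rw [hc] at hut
  obtain ⟨i, hi⟩ := dec1 (c⁻¹ * T * c)
    (by
      calc _ = c⁻¹ * (T * T) * c := by group
        _ = 1 := by rw [ht1]; group)
    (by
      intro h
      apply htn
      calc T = c * (c⁻¹ * T * c) * c⁻¹ := by group
        _ = 1 := by rw [h]; group)
    (by
      generalize finRotate 5 = r at *
      calc _ = c⁻¹ * ((c * r * c⁻¹ * T) * (c * r * c⁻¹ * T) * (c * r * c⁻¹ * T)) * c := by group
        _ = 1 := by rw [hut]; group)
  let s : Perm (Fin 5) := c * (finRotate 5) ^ (i : ℕ)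
  refine ⟨s, ?_⟩
  let K : Subgroup (alternatingGroup (Fin 5)) :=
    ((alternatingGroup (Fin 5)).subtype.comp x.toMonoidHom).eqLocus
      ((MulAut.conj s).toMonoidHom.comp (alternatingGroup (Fin 5)).subtype)
  have hK : K = ⊤ := by
    apply gen
    · change (x uu).1 = s * finRotate 5 * s⁻¹
      rw [hc]
      simp only [s]
      generalize finRotate 5 = r
      group
    · change (x tt).1 = s * (swap 0 1 * swap 2 3) * s⁻¹
      rw [hT]
      calc T = c * (c⁻¹ * T * c) * c⁻¹ := by group
        _ = _ := by rw [hi]; simp only [s, mul_inv_rev, mul_assoc]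
  intro a
  have : a ∈ K := hK ▸ Subgroup.mem_top a
  exact this

theorem part2 (x : MulAut (alternatingGroup (Fin 5))) (hx : x ≠ 1) :
    Nat.card {a : alternatingGroup (Fin 5) | x a = a} ≤ 6 := by
  obtain ⟨s, hs⟩ := aut_conj x
  have hset : {a : alternatingGroup (Fin 5) | x a = a} = {a | s * a.1 = a.1 * s} := by
    ext a
    simp only [Set.mem_ofPred_eq, Subtype.ext_iff, hs, mul_inv_eq_iff_eq_mul]
  rw [hset, card_fix]
  apply dec3
  rintro rfl
  apply hx
  ext1 a
  apply Subtype.ext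
  simpa using hs a

theorem part3 : ∃ x : MulAut (alternatingGroup (Fin 5)), x ≠ 1 ∧
      Nat.card {a : alternatingGroup (Fin 5) | x a = a} = 6 := by
  let x : MulAut (alternatingGroup (Fin 5)) := MulAut.conjNormal (swap (0 : Fin 5) 1)
  have hs : ∀ a, (x a).1 = swap 0 1 * a.1 * (swap 0 1)⁻¹ := fun a =>
    MulAut.conjNormal_apply _ _
  have hset : {a : alternatingGroup (Fin 5) | x a = a} =
      {a | swap 0 1 * a.1 = a.1 * swap 0 1} := by
    ext a
    simp only [Set.mem_ofPred_eq, Subtype.ext_iff, hs, mul_inv_eq_iff_eq_mul]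
  have h6 : Nat.card {a : alternatingGroup (Fin 5) | x a = a} = 6 := by
    rw [hset, card_fix, dec2]
  refine ⟨x, ?_, h6⟩
  intro h
  rw [h] at h6
  have : {a : alternatingGroup (Fin 5) | (1 : MulAut (alternatingGroup (Fin 5))) a = a}
      = Set.univ := by ext a; simp
  rw [this, Nat.card_univ, cardA5] at h6
  omega


/-- For a nonabelian finite simple group `L` and a nontrivial automorphism `x` of `L`,
the fixed-point subgroup `C_L(x)` has size at most `|L|/6` unless `L ≅ A₅`; for
`L = A₅` the maximum of `|C_L(x)|` over nontrivial `x ∈ Aut(L)` is `|L|/10 = 6`. -/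
theorem stmt19 (L : Type*) [Group L] [Finite L] [IsSimpleGroup L]
    (hna : ∃ a b : L, a * b ≠ b * a) :
    (¬ Nonempty (L ≃* alternatingGroup (Fin 5)) →
      ∀ x : MulAut L, x ≠ 1 → 6 * Nat.card {a : L | x a = a} ≤ Nat.card L) ∧
    (∀ x : MulAut (alternatingGroup (Fin 5)), x ≠ 1 →
      Nat.card {a : alternatingGroup (Fin 5) | x a = a} ≤ 6) ∧
    (∃ x : MulAut (alternatingGroup (Fin 5)), x ≠ 1 ∧
      Nat.card {a : alternatingGroup (Fin 5) | x a = a} = 6) ∧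
    Nat.card (alternatingGroup (Fin 5)) / 10 = 6 := by
  exact ⟨fun hL x hx => part1 hna hL x hx, part2, part3, by rw [cardA5]⟩
end
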